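/- For n ≥ 6, let h(n) denote the maximum number of edges of a {P,C}-free 3-graph on n vertices that contains a copy of M. Then h(n) = 2n − 4 for 6 ≤ n ≤ 9, h(10) = 20, and h(n) = 4 + binom(n−4, 2) for n ≥ 11; moreover for n ≥ 11 a {P,C}-free n-vertex 3-graph containing a copy of M has 4 + binom(n−4,2) edges if and only if it is isomorphic to the comet Co(n). -/

import Mathlib

/-- A 3-graph: a finite vertex set together with a finite set of edges
(intended to be 3-element subsets of the vertex set). -/
structure ThreeGraph where
  verts : Finset ℕ
  edges : Finset (Finset ℕ)

namespace ThreeGraph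

/-- `G` is a genuine 3-uniform hypergraph: every edge is a 3-element subset of the vertex set. -/
def IsValid (G : ThreeGraph) : Prop :=
  ∀ e ∈ G.edges, e.card = 3 ∧ e ⊆ G.verts

/-- `H.ContainsCopy F` means `F ⊆ H`: there is an injective map of the vertices of `F`
into those of `H` carrying every edge of `F` to an edge of `H`. -/
def ContainsCopy (H F : ThreeGraph) : Prop :=
  ∃ f : ℕ → ℕ, Set.InjOn f ↑F.verts ∧ (∀ v ∈ F.verts, f v ∈ H.verts) ∧
    ∀ e ∈ F.edges, e.image f ∈ H.edges

/-- `H.Free F` : `H` contains no copy of `F`. -/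
def Free (H F : ThreeGraph) : Prop := ¬ H.ContainsCopy F

/-- `IsoCopy F H` : `H` is isomorphic to `F`. -/
def IsoCopy (F H : ThreeGraph) : Prop :=
  ∃ f : ℕ → ℕ, Set.InjOn f ↑F.verts ∧ F.verts.image f = H.verts ∧
    F.edges.image (Finset.image f) = H.edges

/-- Connectivity: any two vertices are joined by a sequence of vertices in which
consecutive ones lie in a common edge. -/
def Connected (G : ThreeGraph) : Prop :=
  ∀ u ∈ G.verts, ∀ v ∈ G.verts,
    Relation.ReflTransGen (fun a b => ∃ e ∈ G.edges, a ∈ e ∧ b ∈ e) u v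

/-- Shift all vertices by `k`. -/
def shiftBy (G : ThreeGraph) (k : ℕ) : ThreeGraph :=
  ⟨G.verts.image (· + k), G.edges.image (Finset.image (· + k))⟩

/-- Vertex-disjoint union of two 3-graphs. -/
def dUnion (G H : ThreeGraph) : ThreeGraph :=
  ⟨G.verts ∪ (H.shiftBy (G.verts.sup id + 1)).verts,
   G.edges ∪ (H.shiftBy (G.verts.sup id + 1)).edges⟩

end ThreeGraph

/-- The loose 3-uniform path of length 3. -/
def pathP : ThreeGraph :=
  ⟨{0,1,2,3,4,5,6}, {{0,1,2},{2,3,4},{4,5,6}}⟩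

/-- The triangle `C`. -/
def triangleC : ThreeGraph :=
  ⟨{0,1,2,3,4,5}, {{0,1,2},{2,3,4},{4,5,0}}⟩

/-- The matching `M`: two disjoint edges. -/
def matchingM : ThreeGraph :=
  ⟨{0,1,2,3,4,5}, {{0,1,2},{3,4,5}}⟩

/-- `P_2`: two edges sharing exactly one vertex. -/
def pairP2 : ThreeGraph :=
  ⟨{0,1,2,3,4}, {{0,1,2},{2,3,4}}⟩

/-- The complete 3-graph `K_n`. -/
def KK (n : ℕ) : ThreeGraph :=
  ⟨Finset.range n, (Finset.range n).powersetCard 3⟩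

/-- The full star `S_n` with center `0`. -/
def SS (n : ℕ) : ThreeGraph :=
  ⟨Finset.range n, ((Finset.range n).powersetCard 3).filter (fun e => 0 ∈ e)⟩

/-- `G_1(n)` with `x,y,z,v = 0,1,2,3`. -/
def G1 (n : ℕ) : ThreeGraph :=
  ⟨Finset.range n,
   insert {0,1,2}
     (((Finset.range n).powersetCard 3).filter
       (fun h => 3 ∈ h ∧ (h ∩ ({0,1,2} : Finset ℕ)).Nonempty))⟩

/-- `G_2(n)` with `x,y,z = 0,1,2`. -/
def G2 (n : ℕ) : ThreeGraph :=
  ⟨Finset.range n,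
   insert {0,1,2}
     (((Finset.range n).powersetCard 3).filter
       (fun h => (h ∩ ({0,1,2} : Finset ℕ)).card = 2))⟩

/-- `G_3(n)` with `x,y₁,y₂,z₁,z₂ = 0,1,2,3,4`. -/
def G3 (n : ℕ) : ThreeGraph :=
  ⟨Finset.range n,
   ((({0,1,2,3,4} : Finset ℕ).powersetCard 3) \ {{1,2,3},{1,2,4}}) ∪
     ((Finset.range n \ ({0,1,2,3,4} : Finset ℕ)).biUnion (fun w => {{0,3,w},{0,4,w}}))⟩

/-- `K_5^{+t}`: `K_5` on `{0,…,4}` with `a,b = 0,1` and `t` pendant edges `{0,1,v}`. -/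
def K5plus (t : ℕ) : ThreeGraph :=
  ⟨Finset.range (5 + t),
   ((Finset.range 5).powersetCard 3) ∪ ((Finset.Ico 5 (5 + t)).image (fun v => {0,1,v}))⟩

/-- The comet `Co(n)`: a `K_4` on `{0,1,2,3}` and a full star on `{0} ∪ {4,…,n-1}`
with center `0`. -/
def comet (n : ℕ) : ThreeGraph :=
  ⟨Finset.range n,
   (({0,1,2,3} : Finset ℕ).powersetCard 3) ∪
     (((insert 0 (Finset.Ico 4 n)).powersetCard 3).filter (fun e => 0 ∈ e))⟩

/-- `W = V(H) \ U`. -/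
def Wset (H : ThreeGraph) (U : Finset ℕ) : Finset ℕ := H.verts \ U

/-- `W_0`: the vertices of `W` lying in no edge of `H` entirely contained in `W`. -/
def W0set (H : ThreeGraph) (U : Finset ℕ) : Finset ℕ :=
  (Wset H U).filter (fun v => ∀ e ∈ H.edges, e ⊆ Wset H U → v ∉ e)

/-- `W_1 = W \ W_0`. -/
def W1set (H : ThreeGraph) (U : Finset ℕ) : Finset ℕ :=
  Wset H U \ W0set H U

/-- `H_1`: the edges of `H` meeting both `U` and `W_1`. -/
def H1set (H : ThreeGraph) (U : Finset ℕ) : Finset (Finset ℕ) :=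
  H.edges.filter (fun e => (e ∩ U).Nonempty ∧ (e ∩ W1set H U).Nonempty)

/-- `H[U]`: the edges of `H` entirely contained in `U`. -/
def HUset (H : ThreeGraph) (U : Finset ℕ) : Finset (Finset ℕ) :=
  H.edges.filter (fun e => e ⊆ U)

/-- The set of edge numbers of `{P,C}`-free 3-graphs on `n` vertices containing `M`. -/
def condTuranSet (n : ℕ) : Set ℕ :=
  {m : ℕ | ∃ H : ThreeGraph, H.IsValid ∧ H.verts.card = n ∧
    H.Free pathP ∧ H.Free triangleC ∧ H.ContainsCopy matchingM ∧ H.edges.card = m}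

namespace PCM

def PC (E : Finset (Finset ℕ)) : Prop :=
  ∀ e ∈ E, ∀ f ∈ E, ∀ g ∈ E, ∀ p q, p ≠ q → p ∈ e → p ∈ f → (∀ t ∈ e, t ∈ f → t = p) →
    q ∈ f → q ∈ g → (∀ t ∈ f, t ∈ g → t = q) → ∀ t ∈ e, t ≠ p → t ∈ g

structure Good (V : Finset ℕ) (E : Finset (Finset ℕ)) : Prop where
  unif : ∀ e ∈ E, e.card = 3
  sub : ∀ e ∈ E, e ⊆ V
  pc : PC E

def HasM (E : Finset (Finset ℕ)) : Prop := ∃ e ∈ E, ∃ g ∈ E, ∀ t ∈ e, t ∉ g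

def Split (E : Finset (Finset ℕ)) : Prop :=
  ∃ S : Finset ℕ, (∀ e ∈ E, (∀ t ∈ e, t ∈ S) ∨ (∀ t ∈ e, t ∉ S)) ∧
    (∃ e ∈ E, ∀ t ∈ e, t ∈ S) ∧ (∃ e ∈ E, ∀ t ∈ e, t ∉ S)

lemma card3 {a b c : ℕ} (h : ({a, b, c} : Finset ℕ).card = 3) : a ≠ b ∧ a ≠ c ∧ b ≠ c := by
  refine ⟨?_, ?_, ?_⟩
  · rintro rfl
    have h1 : ({a, a, c} : Finset ℕ) ⊆ {a, c} := by grind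
    have := Finset.card_le_card h1
    have := Finset.card_le_two (a := a) (b := c)
    omega
  · rintro rfl
    have h1 : ({a, b, a} : Finset ℕ) ⊆ {a, b} := by grind
    have := Finset.card_le_card h1
    have := Finset.card_le_two (a := a) (b := b)
    omega
  · rintro rfl
    have h1 : ({a, b, b} : Finset ℕ) ⊆ {a, b} := by grind
    have := Finset.card_le_card h1
    have := Finset.card_le_two (a := a) (b := b)
    omega

lemma one_of {e : Finset ℕ} (h : e.card = 3) {x : ℕ} (hx : x ∈ e) :
    ∃ y z, x ≠ y ∧ x ≠ z ∧ y ≠ z ∧ e = {x, y, z} := by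
  obtain ⟨p, q, r, h1, h2, h3, rfl⟩ := Finset.card_eq_three.1 h
  simp only [Finset.mem_insert, Finset.mem_singleton] at hx
  rcases hx with rfl | rfl | rfl
  · exact ⟨q, r, h1, h2, h3, rfl⟩
  · exact ⟨p, r, h1.symm, h3, h2, by grind⟩
  · exact ⟨p, q, h2.symm, h3.symm, h1, by grind⟩

lemma two_of {e : Finset ℕ} (h : e.card = 3) {x y : ℕ} (hx : x ∈ e) (hy : y ∈ e) (hxy : x ≠ y) :
    ∃ z, x ≠ z ∧ y ≠ z ∧ e = {x, y, z} := by
  obtain ⟨p, q, h1, h2, h3, rfl⟩ := one_of h hx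
  simp only [Finset.mem_insert, Finset.mem_singleton] at hy
  rcases hy with rfl | rfl | rfl
  · exact absurd rfl hxy
  · exact ⟨q, h2, h3, rfl⟩
  · exact ⟨p, h1, h3.symm, by grind⟩

lemma three_of {e : Finset ℕ} (h : e.card = 3) {x y z : ℕ} (hx : x ∈ e) (hy : y ∈ e) (hz : z ∈ e)
    (hxy : x ≠ y) (hxz : x ≠ z) (hyz : y ≠ z) : e = {x, y, z} := by
  obtain ⟨w, h1, h2, rfl⟩ := two_of h hx hy hxy
  grind

lemma step {E : Finset (Finset ℕ)} (hE : ∀ e ∈ E, e.card = 3) (hs : ¬ Split E) {h l : Finset ℕ}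
    (hh : h ∈ E) (hl : l ∈ E) (hd : ∀ t ∈ h, t ∉ l) :
    ∃ k ∈ E, ∃ l' ∈ E, (∀ t ∈ h, t ∉ l') ∧ (∃ t ∈ k, t ∈ h) ∧ (∃ t ∈ k, t ∈ l') := by
  by_contra hc
  push Not at hc
  apply hs
  have hne : ∀ e ∈ E, ∃ t, t ∈ e := fun e he =>
    Finset.card_pos.1 (by rw [hE e he]; norm_num)
  refine ⟨(E.filter (fun k => ∃ t ∈ k, t ∈ h)).biUnion id, ?_, ?_, ?_⟩
  · intro e he
    by_cases h1 : ∃ t ∈ e, t ∈ h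
    · left; intro t ht
      simp only [Finset.mem_biUnion, Finset.mem_filter, id]
      exact ⟨e, ⟨he, h1⟩, ht⟩
    · right; intro t ht h2
      simp only [Finset.mem_biUnion, Finset.mem_filter, id] at h2
      obtain ⟨k, ⟨hk, hk'⟩, htk⟩ := h2
      obtain ⟨u, hu, hu'⟩ := hk'
      push Not at h1
      exact hc k hk e he (fun t ht ht' => h1 t ht' ht) ⟨u, hu, hu'⟩ t htk ht
  · refine ⟨h, hh, fun t ht => ?_⟩
    simp only [Finset.mem_biUnion, Finset.mem_filter, id]
    exact ⟨h, ⟨hh, t, ht, ht⟩, ht⟩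
  · refine ⟨l, hl, fun t ht h2 => ?_⟩
    simp only [Finset.mem_biUnion, Finset.mem_filter, id] at h2
    obtain ⟨k, ⟨hk, hk'⟩, htk⟩ := h2
    exact hc k hk l hl hd hk' t htk ht

/-- the basic configuration -/
structure Conf (E : Finset (Finset ℕ)) (a b q c : ℕ) (g : Finset ℕ) : Prop where
  hab : a ≠ b
  hq : {a, b, q} ∈ E
  hc : {a, b, c} ∈ E
  hg : g ∈ E
  ag : a ∉ g
  bg : b ∉ g
  qg : q ∈ g
  cg : c ∉ g

variable {V : Finset ℕ} {E : Finset (Finset ℕ)} {a b q c : ℕ} {g : Finset ℕ}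

lemma ins_swap : ({a, b, c} : Finset ℕ) = {b, a, c} := by grind

lemma Conf.symm (C : Conf E a b q c g) : Conf E b a q c g :=
  ⟨C.hab.symm, ins_swap ▸ C.hq, ins_swap ▸ C.hc, C.hg, C.bg, C.ag, C.qg, C.cg⟩

/-- key: an edge through `w ∈ D` avoiding a, b meets other such edges in 2 or only in w. -/
lemma key (G : Good V E) {w : ℕ} (hw : {a, b, w} ∈ E) {h k : Finset ℕ} (hh : h ∈ E) (hk : k ∈ E)
    (ah : a ∉ h) (bh : b ∉ h) (ak : a ∉ k) (wh : w ∈ h) {y : ℕ} (yh : y ∈ h) (yk : y ∈ k)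
    (yw : y ≠ w) : ∃ y' ∈ h, y' ∈ k ∧ y' ≠ y := by
  by_contra hc
  push Not at hc
  have := card3 (G.unif _ hw)
  exact ak (G.pc _ hw h hh k hk w y yw.symm (by simp) wh (by grind) yh yk hc a (by simp) (by grind))

/-- an edge through a not b, missing some w ∈ D, cannot meet an edge of N in one vertex -/
lemma twin (G : Good V E) {w : ℕ} (hw : {a, b, w} ∈ E) {k' k : Finset ℕ} (hk' : k' ∈ E)
    (hk : k ∈ E) (ak' : a ∈ k') (bk' : b ∉ k') (wk' : w ∉ k') (ak : a ∉ k) (bk : b ∉ k)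
    {y : ℕ} (yk' : y ∈ k') (yk : y ∈ k) : ∃ y' ∈ k', y' ∈ k ∧ y' ≠ y := by
  by_contra hc
  push Not at hc
  have := card3 (G.unif _ hw)
  exact bk (G.pc _ hw k' hk' k hk a y (by grind) (by simp) ak' (by grind) yk' yk hc b (by simp)
    (by grind))

lemma abrel (G : Good V E) {w : ℕ} (hw : {a, b, w} ∈ E) {k' k : Finset ℕ} (hk' : k' ∈ E)
    (hk : k ∈ E) (ak' : a ∈ k') (bk' : b ∉ k') (wk' : w ∉ k') (ak : a ∉ k) (bk : b ∈ k)
    (wk : w ∉ k) : ∀ t ∈ k', t ≠ a → t ∈ k := by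
  have := card3 (G.unif _ hw)
  exact G.pc _ hk' _ hw k hk a b this.1 ak' (by simp) (by grind) (by simp) bk (by grind)

lemma edgesA (G : Good V E) (C : Conf E a b q c g) {k : Finset ℕ} (hk : k ∈ E) (ak : a ∈ k)
    (bk : b ∉ k) : (q ∉ k ∧ ∀ t, t ∈ k ↔ t = a ∨ (t ∈ g ∧ t ≠ q)) ∨ k = {a, q, c} ∨
      (q ∈ k ∧ ∀ t ∈ k, t = a ∨ t ∈ g) := by
  obtain ⟨hab, hq, hc, hg, ag, bg, qg, cg⟩ := C
  have d1 := card3 (G.unif _ hq)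
  have d2 := card3 (G.unif _ hc)
  have hcq : q ≠ c := by rintro rfl; exact cg qg
  by_cases qk : q ∈ k
  · right
    obtain ⟨w, h1, h2, rfl⟩ := two_of (G.unif _ hk) ak qk d1.2.1
    by_cases wc : w = c
    · left; rw [wc]
    · right
      refine ⟨qk, ?_⟩
      by_contra hcon
      have wg : w ∉ g := by grind
      exact bg (G.pc _ hc _ hk _ hg a q d1.2.1 (by simp) (by simp) (by grind) (by simp) qg
        (by grind) b (by simp) (by grind))
  · left
    refine ⟨qk, ?_⟩
    have h1 := G.pc k hk _ hq g hg a q d1.2.1 ak (by simp) (by grind) (by simp) qg (by grind)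
    have h2 := G.pc g hg _ hq k hk q a d1.2.1.symm qg (by simp) (by grind) (by simp) ak (by grind)
    grind

end PCM

namespace PCM

/-- bound for non-split systems -/
def T (n : ℕ) : ℕ := max (2 * n - 4) (4 + (n - 4).choose 2)
def hb (n : ℕ) : ℕ := if n = 10 then 20 else T n
def fb (n : ℕ) : ℕ := if n ≤ 5 then n.choose 3 else (n - 1).choose 2

lemma ch_succ (k : ℕ) : (k + 1).choose 2 = k.choose 2 + k := by
  rw [Nat.choose_succ_succ' k 1, Nat.choose_one_right, add_comm]

lemma T_lin (n : ℕ) : 2 * n - 4 ≤ T n := le_max_left _ _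
lemma T_ch (n : ℕ) : 4 + (n - 4).choose 2 ≤ T n := le_max_right _ _

lemma ch_big (k : ℕ) : 2 * (k + 9) - 4 ≤ 4 + (k + 5).choose 2 := by
  induction k with
  | zero => decide
  | succ k ih => have := ch_succ (k + 5); rw [show k + 1 + 5 = k + 5 + 1 by ring, this]; omega

lemma T_eq {n : ℕ} (hn : 9 ≤ n) : T n = 4 + (n - 4).choose 2 := by
  obtain ⟨k, rfl⟩ := Nat.exists_eq_add_of_le' hn
  have := ch_big k
  rw [T, max_eq_right]
  exact this

lemma T_step {k : ℕ} (hk : 6 ≤ k) : T k + 2 ≤ T (k + 1) ∧ (9 ≤ k → T k + 3 ≤ T (k + 1)) := by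
  have h1 := ch_succ (k - 4)
  rw [show k - 4 + 1 = k + 1 - 4 by omega] at h1
  constructor
  · unfold T; omega
  · intro h9
    rw [T_eq h9, T_eq (by omega), h1]; omega

lemma T_mono {m n : ℕ} (hm : 6 ≤ m) (h : m < n) :
    T m + 2 * (n - m) ≤ T n ∧ (10 ≤ n → T m + 2 * (n - m) < T n) := by
  obtain ⟨k, rfl⟩ := Nat.exists_eq_add_of_lt h
  clear h
  induction k with
  | zero => have := T_step hm; grind
  | succ k ih =>
    have := T_step (k := m + k + 1) (by omega)
    rw [show m + (k + 1) + 1 = m + k + 1 + 1 by ring]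
    grind

lemma T_two {n : ℕ} (hn : 8 ≤ n) : (n - 6) + T (n - 2) < T n := by
  obtain ⟨k, rfl⟩ := Nat.exists_eq_add_of_le' hn
  rcases Nat.lt_or_ge k 3 with h | h
  · interval_cases k <;> decide
  · rw [T_eq (by omega), T_eq (by omega)]
    have h1 := ch_succ (k + 2)
    have h2 := ch_succ (k + 3)
    simp only [show k + 8 - 2 - 4 = k + 2 by omega, show k + 8 - 4 = k + 3 + 1 by omega]
    rw [h2, show k + 3 = k + 2 + 1 by ring, h1]; omega

lemma ch_two (k : ℕ) : 2 * (k + 1).choose 2 = (k + 1) * k := by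
  induction k with
  | zero => decide
  | succ k ih => rw [ch_succ, mul_add, ih]; ring

/-- `fb` values -/
lemma fb_big {m : ℕ} (k : ℕ) (h : m = k + 6) : 2 * fb m = (k + 5) * (k + 4) := by
  subst h
  rw [fb, if_neg (by omega), show k + 6 - 1 = k + 4 + 1 by omega, ch_two]

lemma T_big {n : ℕ} (k : ℕ) (h : n = k + 9) : 2 * T n = 8 + (k + 5) * (k + 4) := by
  subst h
  rw [T_eq (by omega), show k + 9 - 4 = k + 4 + 1 by omega, mul_add, ch_two]

lemma num_aux {i j : ℕ} (hi : 3 ≤ i) (hij : i ≤ j) :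
    (i + j) + fb i + fb j ≤ T (i + j + 2) ∧ (11 ≤ i + j + 2 → (i + j) + fb i + fb j < T (i + j + 2)) ∧
    fb i + fb j ≤ hb (i + j) ∧ (11 ≤ i + j → fb i + fb j < hb (i + j)) := by
  rcases Nat.lt_or_ge j 9 with hj | hj
  · interval_cases j <;> interval_cases i <;> decide
  · obtain ⟨l, rfl⟩ := Nat.exists_eq_add_of_le' hj
    have h1 := fb_big (m := l + 9) (l + 3) (by omega)
    have h2 := T_big (n := i + (l + 9) + 2) (i + l + 2) (by omega)
    have h3 := T_big (n := i + (l + 9)) (i + l) (by omega)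
    have h4 : hb (i + (l + 9)) = T (i + (l + 9)) := by rw [hb, if_neg (by omega)]
    rw [h4]
    rcases Nat.lt_or_ge i 6 with hi6 | hi6
    · have h5 : fb 3 = 1 := by decide
      have h6 : fb 4 = 4 := by decide
      have h7 : fb 5 = 10 := by decide
      interval_cases i <;> refine ⟨?_, ?_, ?_, ?_⟩ <;> intros <;> nlinarith
    · obtain ⟨m, rfl⟩ := Nat.exists_eq_add_of_le' hi6
      have h5 := fb_big (m := m + 6) m (by omega)
      refine ⟨?_, ?_, ?_, ?_⟩ <;> intros <;> nlinarith

lemma num {i j : ℕ} (hi : 3 ≤ i) (hj : 3 ≤ j) :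
    (i + j) + fb i + fb j ≤ T (i + j + 2) ∧ (11 ≤ i + j + 2 → (i + j) + fb i + fb j < T (i + j + 2)) ∧
    fb i + fb j ≤ hb (i + j) ∧ (11 ≤ i + j → fb i + fb j < hb (i + j)) := by
  rcases le_total i j with h | h
  · exact num_aux hi h
  · have := num_aux hj h
    rw [add_comm j i] at this
    grind

lemma fb_mono_hb {m : ℕ} (hm : 6 ≤ m) : hb m ≤ fb m := by
  rcases Nat.lt_or_ge m 11 with h | h
  · interval_cases m <;> decide
  · obtain ⟨k, rfl⟩ := Nat.exists_eq_add_of_le' h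
    have h1 := fb_big (m := k + 11) (k + 5) (by omega)
    have h2 := T_big (n := k + 11) (k + 2) (by omega)
    rw [hb, if_neg (by omega)]
    nlinarith

lemma star_num {d M : ℕ} (hd : 2 ≤ d) (hM : 4 ≤ M) : d + M.choose 2 ≤ 2 + (M + d - 2).choose 2 := by
  obtain ⟨k, rfl⟩ := Nat.exists_eq_add_of_le' hd
  induction k with
  | zero => simp
  | succ k ih =>
    have := ih (by omega)
    have h := ch_succ (M + k)
    rw [show M + (k + 1 + 2) - 2 = M + k + 1 by omega, h]
    rw [show M + (k + 2) - 2 = M + k by omega] at this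
    omega

lemma ekr {V : Finset ℕ} {E : Finset (Finset ℕ)} (h3 : ∀ e ∈ E, e.card = 3) (hs : ∀ e ∈ E, e ⊆ V)
    (hi : ¬ HasM E) (hV : 6 ≤ V.card) : E.card ≤ (V.card - 1).choose 2 := by
  classical
  set n := V.card with hn
  let em := V.orderEmbOfFin hn.symm
  let φ : Finset ℕ → Finset (Fin n) := fun e => Finset.univ.filter (fun i => em i ∈ e)
  have hφ : ∀ e ∈ E, (φ e).map em.toEmbedding = e := by
    intro e he
    ext x
    simp only [Finset.mem_map, φ, Finset.mem_filter, Finset.mem_univ, true_and]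
    constructor
    · rintro ⟨i, hi, rfl⟩; exact hi
    · intro hx
      have : x ∈ Set.range em := by
        rw [Finset.range_orderEmbOfFin]; exact hs e he hx
      obtain ⟨i, rfl⟩ := this
      exact ⟨i, hx, rfl⟩
  have hinj : Set.InjOn φ E := by
    intro e he f hf hef
    rw [← hφ e he, ← hφ f hf, hef]
  rw [← Finset.card_image_of_injOn hinj]
  have := Finset.erdos_ko_rado (n := n) (𝒜 := E.image φ) (r := 3) ?_ ?_ (by omega)
  · simpa using this
  · intro A hA B hB hAB
    simp only [Finset.coe_image, Set.mem_image, Finset.mem_coe] at hA hB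
    obtain ⟨e, he, rfl⟩ := hA
    obtain ⟨f, hf, rfl⟩ := hB
    apply hi
    refine ⟨e, he, f, hf, fun t ht ht' => ?_⟩
    have : t ∈ Set.range em := by
      rw [Finset.range_orderEmbOfFin]; exact hs e he ht
    obtain ⟨i, rfl⟩ := this
    exact Finset.disjoint_left.1 hAB (by simpa [φ] using ht) (by simpa [φ] using ht')
  · intro A hA
    simp only [Finset.coe_image, Set.mem_image, Finset.mem_coe] at hA
    obtain ⟨e, he, rfl⟩ := hA
    rw [← h3 e he, ← Finset.card_map em.toEmbedding, hφ e he]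

end PCM

namespace PCM

variable {V : Finset ℕ} {E : Finset (Finset ℕ)} {a b q c : ℕ} {g : Finset ℕ}

def Dset (V : Finset ℕ) (E : Finset (Finset ℕ)) (a b : ℕ) : Finset ℕ :=
  V.filter (fun w => {a, b, w} ∈ E)
def Nset (E : Finset (Finset ℕ)) (a b : ℕ) : Finset (Finset ℕ) :=
  E.filter (fun e => a ∉ e ∧ b ∉ e)
def Aset (E : Finset (Finset ℕ)) (a b : ℕ) : Finset (Finset ℕ) :=
  E.filter (fun e => a ∈ e ∧ b ∉ e)

lemma mem_N {k : Finset ℕ} : k ∈ Nset E a b ↔ k ∈ E ∧ a ∉ k ∧ b ∉ k := by simp [Nset]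
lemma mem_A {k : Finset ℕ} : k ∈ Aset E a b ↔ k ∈ E ∧ a ∈ k ∧ b ∉ k := by simp [Aset]
lemma mem_D (G : Good V E) {w : ℕ} : w ∈ Dset V E a b ↔ {a, b, w} ∈ E := by
  simp only [Dset, Finset.mem_filter, and_iff_right_iff_imp]
  intro h
  exact G.sub _ h (by simp)

lemma Good.mono (G : Good V E) {F : Finset (Finset ℕ)} (h : F ⊆ E) {W : Finset ℕ}
    (hW : ∀ e ∈ F, e ⊆ W) : Good W F :=
  ⟨fun e he => G.unif e (h he), hW, fun e he f hf g hg => G.pc e (h he) f (h hf) g (h hg)⟩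

lemma N_sub : Nset E a b ⊆ E := Finset.filter_subset _ _

lemma Good.N (G : Good V E) : Good (V \ {a, b}) (Nset E a b) := by
  refine G.mono N_sub fun e he => ?_
  rw [mem_N] at he
  intro x hx
  have := G.sub _ he.1 hx
  grind

lemma count (G : Good V E) (hab : a ≠ b) :
    E.card ≤ (Dset V E a b).card + (Aset E a b).card + (Aset E b a).card + (Nset E a b).card := by
  have h : E ⊆ (Dset V E a b).image (fun w => {a, b, w}) ∪ Aset E a b ∪ Aset E b a ∪ Nset E a b := by
    intro e he
    simp only [Finset.mem_union, Finset.mem_image, mem_A, mem_N, mem_D G]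
    by_cases h1 : a ∈ e <;> by_cases h2 : b ∈ e
    · obtain ⟨z, _, _, rfl⟩ := two_of (G.unif _ he) h1 h2 hab
      exact Or.inl (Or.inl (Or.inl ⟨z, he, rfl⟩))
    all_goals tauto
  calc E.card ≤ _ := Finset.card_le_card h
    _ ≤ ((Dset V E a b).image (fun w => ({a, b, w} : Finset ℕ))).card + (Aset E a b).card
        + (Aset E b a).card + (Nset E a b).card := by
      refine (Finset.card_union_le _ _).trans ?_
      gcongr
      refine (Finset.card_union_le _ _).trans ?_
      gcongr
      exact Finset.card_union_le _ _
    _ ≤ _ := by gcongr; exact Finset.card_image_le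

lemma D_card (hab : a ≠ b) (ha : a ∈ V) (hb : b ∈ V) (G : Good V E) :
    Dset V E a b ⊆ V \ {a, b} ∧ (V \ {a, b}).card + 2 = V.card := by
  constructor
  · intro w hw
    rw [mem_D G] at hw
    have := card3 (G.unif _ hw)
    have := G.sub _ hw
    simp only [Finset.mem_sdiff, Finset.mem_insert, Finset.mem_singleton]
    grind
  · have h2 : ({a, b} : Finset ℕ) ⊆ V := by grind
    have := Finset.card_sdiff_add_card_eq_card h2
    rwa [Finset.card_pair hab] at this

def Q (n : ℕ) : Prop := ∀ V E, V.card = n → Good V E → HasM E →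
  (¬ Split E → E.card ≤ T n) ∧ E.card ≤ hb n

lemma six (G : Good V E) (h : HasM E) : 6 ≤ V.card := by
  obtain ⟨e, he, g, hg, hd⟩ := h
  have h1 : e ∪ g ⊆ V := Finset.union_subset (G.sub _ he) (G.sub _ hg)
  have h2 := Finset.card_le_card h1
  rw [Finset.card_union_of_disjoint (Finset.disjoint_left.2 hd), G.unif _ he, G.unif _ hg] at h2
  exact h2

lemma fbound {n : ℕ} (ih : ∀ m < n, Q m) (G : Good V E) (h : V.card < n) : E.card ≤ fb V.card := by
  by_cases h5 : V.card ≤ 5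
  · rw [fb, if_pos h5]
    rw [← Finset.card_powersetCard]
    apply Finset.card_le_card
    intro e he
    rw [Finset.mem_powersetCard]
    exact ⟨G.sub _ he, G.unif _ he⟩
  · by_cases hM : HasM E
    · exact ((ih _ h _ _ rfl G hM).2).trans (fb_mono_hb (by omega))
    · rw [fb, if_neg h5]
      exact ekr G.unif G.sub hM (by omega)

lemma splitBound {n : ℕ} (ih : ∀ m < n, Q m) (G : Good V E) (hV : V.card ≤ n) (hs : Split E) :
    ∃ i j, 3 ≤ i ∧ 3 ≤ j ∧ i + j = V.card ∧ E.card ≤ fb i + fb j := by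
  obtain ⟨S, hS, ⟨e, he, he'⟩, ⟨f, hf, hf'⟩⟩ := hs
  have hi : 3 ≤ (V ∩ S).card := by
    rw [← G.unif _ he]; apply Finset.card_le_card
    intro x hx
    exact Finset.mem_inter.2 ⟨G.sub _ he hx, he' x hx⟩
  have hj : 3 ≤ (V \ S).card := by
    rw [← G.unif _ hf]; apply Finset.card_le_card
    intro x hx
    exact Finset.mem_sdiff.2 ⟨G.sub _ hf hx, hf' x hx⟩
  have hij : (V ∩ S).card + (V \ S).card = V.card := Finset.card_inter_add_card_sdiff V S
  refine ⟨_, _, hi, hj, hij, ?_⟩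
  have G1 : Good (V ∩ S) (E.filter (fun e => ∀ t ∈ e, t ∈ S)) := by
    refine G.mono (Finset.filter_subset _ _) fun e he x hx => ?_
    rw [Finset.mem_filter] at he
    exact Finset.mem_inter.2 ⟨G.sub _ he.1 hx, he.2 x hx⟩
  have G2 : Good (V \ S) (E.filter (fun e => ¬ ∀ t ∈ e, t ∈ S)) := by
    refine G.mono (Finset.filter_subset _ _) fun e he x hx => ?_
    rw [Finset.mem_filter] at he
    refine Finset.mem_sdiff.2 ⟨G.sub _ he.1 hx, ?_⟩
    rcases hS e he.1 with h | h
    · exact absurd h he.2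
    · exact h x hx
  have b1 := fbound ih G1 (by omega)
  have b2 := fbound ih G2 (by omega)
  rw [← Finset.card_filter_add_card_filter_not (s := E) (fun e => ∀ t ∈ e, t ∈ S)]
  omega

/-- the α-configuration -/
structure Alpha (E : Finset (Finset ℕ)) (a b q w : ℕ) (g h : Finset ℕ) : Prop where
  hab : a ≠ b
  hqw : q ≠ w
  hq : {a, b, q} ∈ E
  hw : {a, b, w} ∈ E
  hg : g ∈ E
  hh : h ∈ E
  ag : a ∉ g
  bg : b ∉ g
  ah : a ∉ h
  bh : b ∉ h
  qg : q ∈ g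
  wh : w ∈ h
  disj : ∀ t ∈ g, t ∉ h

lemma Alpha.symm {w : ℕ} {h : Finset ℕ} (A : Alpha E a b q w g h) : Alpha E b a q w g h :=
  ⟨A.hab.symm, A.hqw, ins_swap ▸ A.hq, ins_swap ▸ A.hw, A.hg, A.hh, A.bg, A.ag, A.bh, A.ah, A.qg,
    A.wh, A.disj⟩

lemma Alpha.empty (G : Good V E) {w : ℕ} {h : Finset ℕ} (A : Alpha E a b q w g h) :
    Aset E a b = ∅ := by
  obtain ⟨hab, hqw, hq, hw, hg, hh, ag, bg, ah, bh, qg, wh, disj⟩ := A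
  rw [Finset.eq_empty_iff_forall_notMem]
  intro k hk
  rw [mem_A] at hk
  obtain ⟨hk, ak, bk⟩ := hk
  have C1 : Conf E a b q w g := ⟨hab, hq, hw, hg, ag, bg, qg, fun h' => disj _ h' wh⟩
  have C2 : Conf E a b w q h := ⟨hab, hw, hq, hh, ah, bh, wh, fun h' => disj _ qg h'⟩
  have d1 := card3 (G.unif _ hq)
  have d2 := card3 (G.unif _ hw)
  have h1 := edgesA G C1 hk ak bk
  have h2 := edgesA G C2 hk ak bk
  obtain ⟨x, y, e1, e2, e3, rfl⟩ := one_of (G.unif _ hk) ak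
  have hkk : ({a, x, y} : Finset ℕ) = {a, q, w} := by
    rcases h1 with h1 | h1 | h1
    · rcases h2 with h2 | h2 | h2
      · have := h1.2 x; have := h2.2 x; grind
      · rw [h2]; grind
      · have := h1.2 x; have := h2.2 x; grind
    · exact h1
    · rcases h2 with h2 | h2 | h2
      · have := h1.2 x; have := h2.2 x; grind
      · rw [h2]; grind
      · have := h1.2 x; have := h2.2 x; grind
  rw [hkk] at hk
  obtain ⟨r, s, f1, f2, f3, rfl⟩ := one_of (G.unif _ hg) qg
  have := G.pc _ hg _ hk _ hh q w hqw (by simp) (by simp) (by grind) (by simp) wh (by grind) r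
    (by simp) (by grind)
  exact disj r (by simp) this

lemma noTwoD (G : Good V E) (hs : ¬ Split (Nset E a b)) (hM : HasM (Nset E a b)) {h : Finset ℕ}
    (hh : h ∈ Nset E a b) {w w' : ℕ} (hw : {a, b, w} ∈ E) (hw' : {a, b, w'} ∈ E) (wh : w ∈ h)
    (wh' : w' ∈ h) : w = w' := by
  by_contra hne
  have GN := G.N (a := a) (b := b)
  obtain ⟨hhE, ah, bh⟩ := mem_N.1 hh
  have two : ∀ k ∈ Nset E a b, ∀ y ∈ h, y ∈ k → ∃ y' ∈ h, y' ∈ k ∧ y' ≠ y := by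
    intro k hk y yh yk
    obtain ⟨hkE, ak, bk⟩ := mem_N.1 hk
    by_cases hy : y = w
    · exact key G hw' hhE hkE ah bh ak wh' yh yk (by grind)
    · exact key G hw hhE hkE ah bh ak wh yh yk hy
  have all : ∀ l ∈ Nset E a b, ∃ t ∈ h, t ∈ l := by
    by_contra hc
    push Not at hc
    obtain ⟨l, hl, hl'⟩ := hc
    obtain ⟨k, hk, l', hl1, hd, ⟨y, yk, yh⟩, ⟨z, zk, zl⟩⟩ := step GN.unif hs hh hl hl'
    obtain ⟨y', yh', yk', hyy⟩ := two k hk y yh yk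
    obtain ⟨z', i1, i2, rfl⟩ := two_of (GN.unif _ hk) yk yk' hyy.symm
    have hzz : z = z' := by grind
    subst hzz
    obtain ⟨hkE, ak, bk⟩ := mem_N.1 hk
    obtain ⟨hlE, al, bl⟩ := mem_N.1 hl1
    obtain ⟨u, j1, j2, rfl⟩ := two_of (GN.unif _ hh) yh yh' hyy.symm
    have : ∃ v, (v = w ∨ v = w') ∧ (v = y ∨ v = y') := by
      clear two hd
      simp only [Finset.mem_insert, Finset.mem_singleton] at wh wh'
      by_cases h1 : w = y ∨ w = y'
      · exact ⟨w, Or.inl rfl, h1⟩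
      · exact ⟨w', Or.inr rfl, by omega⟩
    obtain ⟨v, hv1, hv2⟩ := this
    have hv : {a, b, v} ∈ E := by rcases hv1 with rfl | rfl <;> assumption
    obtain ⟨x, x1, x2, x3⟩ := key G hv hkE hlE ak bk al (by grind) zk zl (by grind)
    grind
  obtain ⟨e1, he1, e2, he2, hd⟩ := hM
  obtain ⟨y, yh, y1⟩ := all e1 he1
  obtain ⟨z, zh, z1⟩ := all e2 he2
  obtain ⟨y', yh', y1', _⟩ := two e1 he1 y yh y1
  obtain ⟨z', zh', z1', _⟩ := two e2 he2 z zh z1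
  obtain ⟨u, j1, j2, rfl⟩ := two_of (GN.unif _ hh) yh yh' (by grind)
  have q1 := hd y y1
  have q2 := hd y' y1'
  have hyy : y' ≠ y := by assumption
  have hzz : z' ≠ z := by assumption
  clear two all hd
  simp only [Finset.mem_insert, Finset.mem_singleton] at zh zh'
  rcases zh with rfl | rfl | rfl
  · exact q1 z1
  · exact q2 z1
  · rcases zh' with rfl | rfl | rfl
    · exact q1 z1'
    · exact q2 z1'
    · exact hzz rfl

lemma alphaBound {n : ℕ} (ih : ∀ m < n, Q m) (G : Good V E) (hV : V.card = n) {w : ℕ}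
    {h : Finset ℕ} (A : Alpha E a b q w g h) :
    E.card ≤ T n ∧ (11 ≤ n → E.card < T n) := by
  have h1 := A.empty G
  have h2 := A.symm.empty G
  have h3 := count G A.hab
  rw [h1, h2, Finset.card_empty] at h3
  have GN := G.N (a := a) (b := b)
  have hg : g ∈ Nset E a b := mem_N.2 ⟨A.hg, A.ag, A.bg⟩
  have hh : h ∈ Nset E a b := mem_N.2 ⟨A.hh, A.ah, A.bh⟩
  have hM : HasM (Nset E a b) := ⟨g, hg, h, hh, A.disj⟩
  obtain ⟨hD, hc⟩ := D_card A.hab (G.sub _ A.hq (by simp)) (G.sub _ A.hq (by simp)) G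
  have h6 := six GN hM
  by_cases hs : Split (Nset E a b)
  · obtain ⟨i, j, hi, hj, hij, hb⟩ := splitBound ih GN (by omega) hs
    have hnum := num hi hj
    have := Finset.card_le_card hD
    rw [show i + j + 2 = n by omega] at hnum
    constructor
    · omega
    · intro h11
      have := hnum.2.1 h11
      omega
  · have hTN := (ih (n - 2) (by omega) _ _ (by omega) GN hM).1 hs
    have hT := T_two (n := n) (by omega)
    have hd : (Dset V E a b).card + 4 ≤ (V \ {a, b}).card := by
      have e1 : 2 ≤ (g.erase q).card := by
        rw [Finset.card_erase_of_mem A.qg, G.unif _ A.hg]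
      have e2 : 2 ≤ (h.erase w).card := by
        rw [Finset.card_erase_of_mem A.wh, G.unif _ A.hh]
      have e3 : Disjoint (g.erase q) (h.erase w) := by
        rw [Finset.disjoint_left]
        intro t ht ht'
        exact A.disj t (Finset.mem_of_mem_erase ht) (Finset.mem_of_mem_erase ht')
      have e4 : Disjoint (Dset V E a b) (g.erase q ∪ h.erase w) := by
        rw [Finset.disjoint_left]
        intro t ht ht'
        rw [mem_D G] at ht
        rw [Finset.mem_union, Finset.mem_erase, Finset.mem_erase] at ht'
        rcases ht' with ht' | ht'
        · exact ht'.1 (noTwoD G hs hM hg ht A.hq ht'.2 A.qg)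
        · exact ht'.1 (noTwoD G hs hM hh ht A.hw ht'.2 A.wh)
      have e5 : Dset V E a b ∪ (g.erase q ∪ h.erase w) ⊆ V \ {a, b} := by
        refine Finset.union_subset hD (Finset.union_subset ?_ ?_)
        · exact (Finset.erase_subset _ _).trans (GN.sub _ hg)
        · exact (Finset.erase_subset _ _).trans (GN.sub _ hh)
      have := Finset.card_le_card e5
      rw [Finset.card_union_of_disjoint e4, Finset.card_union_of_disjoint e3] at this
      omega
    constructor
    · omega
    · intro _; omega

end PCM

namespace PCM
variable {V : Finset ℕ} {E : Finset (Finset ℕ)} {a b q c : ℕ} {g : Finset ℕ}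

lemma confExists (G : Good V E) (hs : ¬ Split E) (hM : HasM E) :
    ∃ a b q c g, Conf E a b q c g := by
  obtain ⟨h, hh, l, hl, hd⟩ := hM
  obtain ⟨k, hk, l', hl', hd', ⟨y, yk, yh⟩, ⟨z, zk, zl⟩⟩ := step G.unif hs hh hl hd
  have hyz : y ≠ z := by rintro rfl; exact hd' _ yh zl
  obtain ⟨x, yx, zx, rfl⟩ := two_of (G.unif _ hk) yk zk hyz
  by_cases xh : x ∈ h
  · obtain ⟨c, yc, xc, rfl⟩ := two_of (G.unif _ hh) yh xh yx
    refine ⟨y, x, z, c, l', yx, ?_, hh, hl', hd' _ yh, hd' _ xh, zl, hd' _ (by simp)⟩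
    convert hk using 1; grind
  · by_cases xl : x ∈ l'
    · obtain ⟨c, zc, xc, rfl⟩ := two_of (G.unif _ hl') zl xl zx
      refine ⟨z, x, y, c, h, zx, ?_, hl', hh, fun h' => hd' _ h' zl, xh, yh,
        fun h' => hd' _ h' (by simp)⟩
      convert hk using 1; grind
    · exfalso
      obtain ⟨u, v, yu, yv, uv, rfl⟩ := one_of (G.unif _ hh) yh
      have := G.pc _ hh _ hk _ hl' y z hyz (by simp) (by simp) (by grind) (by simp) zl (by grind) u
        (by simp) (by grind)
      exact hd' u (by simp) this

lemma sideTouch (G : Good V E) (hs : ¬ Split E) (C : Conf E a b q c g) {S : Finset ℕ}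
    (hS : ∀ e ∈ Nset E a b, (∀ t ∈ e, t ∈ S) ∨ (∀ t ∈ e, t ∉ S))
    (h0 : ∃ e ∈ Nset E a b, ∀ t ∈ e, t ∈ S) :
    ∃ f ∈ Nset E a b, (∀ t ∈ f, t ∈ S) ∧ ∃ w ∈ f, {a, b, w} ∈ E := by
  by_contra hc
  push Not at hc
  apply hs
  have mS : ∀ t, t ∈ ((Nset E a b).filter (fun e => ∀ t ∈ e, t ∈ S)).biUnion id ↔
      ∃ f ∈ Nset E a b, (∀ t ∈ f, t ∈ S) ∧ t ∈ f := by
    intro t; simp only [Finset.mem_biUnion, Finset.mem_filter, id]; grind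
  set S' := ((Nset E a b).filter (fun e => ∀ t ∈ e, t ∈ S)).biUnion id with hS'
  have nD : ∀ w, {a, b, w} ∈ E → w ∉ S' := by
    intro w hw h
    obtain ⟨f, f1, f2, f3⟩ := (mS w).1 h
    exact hc f f1 f2 w f3 hw
  have na : a ∉ S' := by
    intro h
    obtain ⟨f, f1, f2, f3⟩ := (mS a).1 h
    exact (mem_N.1 f1).2.1 f3
  have nb : b ∉ S' := by
    intro h
    obtain ⟨f, f1, f2, f3⟩ := (mS b).1 h
    exact (mem_N.1 f1).2.2 f3
  have ng : ∀ t ∈ g, t ∉ S' := by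
    have hgN : g ∈ Nset E a b := mem_N.2 ⟨C.hg, C.ag, C.bg⟩
    intro t ht h
    obtain ⟨f, f1, f2, f3⟩ := (mS t).1 h
    rcases hS g hgN with h1 | h1
    · exact hc g hgN h1 q C.qg C.hq
    · exact h1 t ht (f2 t f3)
  have nA : ∀ {a b}, a ∉ S' → Conf E a b q c g → (∀ w, {a, b, w} ∈ E → w ∉ S') →
      ∀ e ∈ E, a ∈ e → b ∉ e → ∀ t ∈ e, t ∉ S' := by
    intro a b na C nD e he ae be t te
    rcases edgesA G C he ae be with h | h | h
    · rcases (h.2 t).1 te with rfl | h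
      · exact na
      · exact ng _ h.1
    · subst h
      simp only [Finset.mem_insert, Finset.mem_singleton] at te
      rcases te with rfl | rfl | rfl
      · exact na
      · exact nD _ C.hq
      · exact nD _ C.hc
    · rcases h.2 t te with rfl | h
      · exact na
      · exact ng _ h
  refine ⟨S', ?_, ?_, ⟨_, C.hq, ?_⟩⟩
  · intro e he
    by_cases h1 : a ∈ e <;> by_cases h2 : b ∈ e
    · right
      obtain ⟨w, _, _, rfl⟩ := two_of (G.unif _ he) h1 h2 C.hab
      have := nD w he
      intro t ht
      simp only [Finset.mem_insert, Finset.mem_singleton] at ht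
      rcases ht with rfl | rfl | rfl <;> assumption
    · right; exact nA na C nD e he h1 h2
    · right; exact nA nb C.symm (fun w hw => nD w (ins_swap ▸ hw)) e he h2 h1
    · have hN : e ∈ Nset E a b := mem_N.2 ⟨he, h1, h2⟩
      rcases hS e hN with h | h
      · left; intro t ht; exact (mS t).2 ⟨e, hN, h, ht⟩
      · right; intro t ht h'
        obtain ⟨f, f1, f2, f3⟩ := (mS t).1 h'
        exact h t ht (f2 t f3)
  · obtain ⟨e, he, h⟩ := h0
    exact ⟨e, (mem_N.1 he).1, fun t ht => (mS t).2 ⟨e, he, h, ht⟩⟩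
  · have := nD q C.hq
    intro t ht
    simp only [Finset.mem_insert, Finset.mem_singleton] at ht
    rcases ht with rfl | rfl | rfl <;> assumption

lemma nSplit (G : Good V E) (hs : ¬ Split E) (C : Conf E a b q c g) (hN : Split (Nset E a b)) :
    ∃ w1 w2 g' h', Alpha E a b w1 w2 g' h' := by
  obtain ⟨S, hS, h1, h2⟩ := hN
  obtain ⟨f, hf, fS, w, wf, hw⟩ := sideTouch G hs C hS h1
  have hV : ∀ e ∈ Nset E a b, ∀ t ∈ e, t ∈ V := fun e he t ht => G.sub _ (mem_N.1 he).1 ht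
  obtain ⟨f', hf', fS', w', wf', hw'⟩ := sideTouch (S := V \ S) G hs C (by
      intro e he
      have := hV e he
      rcases hS e he with h | h
      · right; intro t ht; have := h t ht; simp [this]
      · left; intro t ht; have := h t ht; simp [this, hV e he t ht]) (by
      obtain ⟨e, he, h⟩ := h2
      exact ⟨e, he, fun t ht => by simp [h t ht, hV e he t ht]⟩)
  have hd : ∀ t ∈ f, t ∉ f' := fun t ht ht' => (Finset.mem_sdiff.1 (fS' t ht')).2 (fS t ht)
  obtain ⟨e1, e2, e3⟩ := mem_N.1 hf
  obtain ⟨e1', e2', e3'⟩ := mem_N.1 hf'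
  exact ⟨w, w', f, f', C.hab, by rintro rfl; exact hd _ wf wf', hw, hw', e1, e1', e2, e3, e2', e3',
    wf, wf', hd⟩
end PCM

namespace PCM
variable {V : Finset ℕ} {E : Finset (Finset ℕ)} {a b q c : ℕ} {g : Finset ℕ}

lemma DN (G : Good V E) (C : Conf E a b q c g) (nA : ∀ a b q w g h, ¬ Alpha E a b q w g h)
    (hs : ¬ Split (Nset E a b)) (hM : HasM (Nset E a b)) {w : ℕ} {h : Finset ℕ}
    (hw : {a, b, w} ∈ E) (hh : h ∈ Nset E a b) (wh : w ∈ h) : w = q := by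
  by_contra hne
  have GN := G.N (a := a) (b := b)
  have hg : g ∈ Nset E a b := mem_N.2 ⟨C.hg, C.ag, C.bg⟩
  obtain ⟨hhE, ah, bh⟩ := mem_N.1 hh
  have qh : q ∉ h := fun h' => hne (noTwoD G hs hM hh hw C.hq wh h')
  have wg : w ∉ g := fun h' => hne (noTwoD G hs hM hg hw C.hq h' C.qg)
  have hnd : ∃ y ∈ g, y ∈ h := by
    by_contra hc
    push Not at hc
    exact nA a b q w g h ⟨C.hab, Ne.symm hne, C.hq, hw, C.hg, hhE, C.ag, C.bg, ah, bh, C.qg, wh, hc⟩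
  obtain ⟨y, yg, yh⟩ := hnd
  have yw : y ≠ w := by rintro rfl; exact wg yg
  have yq : y ≠ q := by rintro rfl; exact qh yh
  obtain ⟨y', yh', yg', yy⟩ := key G hw hhE C.hg ah bh C.ag wh yh yg yw
  have yw' : y' ≠ w := by rintro rfl; exact wg yg'
  have yq' : y' ≠ q := by rintro rfl; exact qh yh'
  have g3 := three_of (G.unif _ C.hg) yg yg' C.qg yy.symm yq yq'
  have h3 := three_of (G.unif _ hhE) yh yh' wh yy.symm yw yw'
  have all : ∀ k ∈ Nset E a b, ∀ t ∈ g, t ∈ k → y ∈ k ∧ y' ∈ k := by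
    intro k hk t tg tk
    obtain ⟨hkE, ak, bk⟩ := mem_N.1 hk
    by_cases qk : q ∈ k
    · have wk : w ∉ k := fun h' => hne (noTwoD G hs hM hk hw C.hq h' qk)
      have : ∃ u ∈ k, u ∈ h := by
        by_contra hc
        push Not at hc
        exact nA a b q w k h ⟨C.hab, Ne.symm hne, C.hq, hw, hkE, hhE, ak, bk, ah, bh, qk, wh, hc⟩
      obtain ⟨u, uk, uh⟩ := this
      have uw : u ≠ w := by rintro rfl; exact wk uk
      obtain ⟨u', uh', uk', uu⟩ := key G hw hhE hkE ah bh ak wh uh uk uw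
      have uw' : u' ≠ w := by rintro rfl; exact wk uk'
      rw [h3] at uh uh'
      simp only [Finset.mem_insert, Finset.mem_singleton] at uh uh'
      clear g3 h3 yg tg nA
      rcases uh with rfl | rfl | rfl <;> rcases uh' with rfl | rfl | rfl <;> tauto
    · have tq : t ≠ q := by rintro rfl; exact qk tk
      obtain ⟨u', uh', uk', uu⟩ := key G C.hq C.hg hkE C.ag C.bg ak C.qg tg tk tq
      have uq' : u' ≠ q := by rintro rfl; exact qk uk'
      rw [g3] at tg uh'
      simp only [Finset.mem_insert, Finset.mem_singleton] at tg uh'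
      clear g3 h3 nA
      rcases tg with rfl | rfl | rfl <;> rcases uh' with rfl | rfl | rfl <;> tauto
  have : ∃ l ∈ Nset E a b, ∀ t ∈ g, t ∉ l := by
    by_contra hc
    push Not at hc
    obtain ⟨e1, h1, e2, h2, hd⟩ := hM
    obtain ⟨t1, i1, i2⟩ := hc e1 h1
    obtain ⟨t2, j1, j2⟩ := hc e2 h2
    exact hd y (all e1 h1 t1 i1 i2).1 (all e2 h2 t2 j1 j2).1
  obtain ⟨l, hl, hgl⟩ := this
  obtain ⟨k, hk, l', hl', hd', ⟨t, tk, tg⟩, ⟨z, zk, zl⟩⟩ := step GN.unif hs hg hl hgl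
  obtain ⟨yk, yk'⟩ := all k hk t tg tk
  obtain ⟨hkE, ak, bk⟩ := mem_N.1 hk
  obtain ⟨hlE, al, bl⟩ := mem_N.1 hl'
  have yl := hd' y yg
  have yl' := hd' y' yg'
  have ql := hd' q C.qg
  have k3 := three_of (G.unif _ hkE) yk yk' zk yy.symm (by rintro rfl; exact yl zl)
    (by rintro rfl; exact yl' zl)
  have ya : y ≠ a := by rintro rfl; exact ak yk
  have yb : y ≠ b := by rintro rfl; exact bk yk
  have ya' : y' ≠ a := by rintro rfl; exact ak yk'
  have yb' : y' ≠ b := by rintro rfl; exact bk yk'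
  refine nA y y' q z {a, b, q} l' ⟨yy.symm, by rintro rfl; exact ql zl, g3 ▸ C.hg, k3 ▸ hkE, C.hq,
    hlE, by simp [*], by simp [*], yl, yl', by simp, zl, ?_⟩
  intro t ht
  simp only [Finset.mem_insert, Finset.mem_singleton] at ht
  rcases ht with rfl | rfl | rfl <;> assumption

lemma noAqr (G : Good V E) (C : Conf E a b q c g) 
    (hs : ¬ Split (Nset E a b)) (hM : HasM (Nset E a b)) 
    {k' : Finset ℕ} (hk' : k' ∈ E) (ak' : a ∈ k') (bk' : b ∉ k') (qk' : q ∈ k')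
    (sub : ∀ t ∈ k', t = a ∨ t ∈ g) : False := by
  have GN := G.N (a := a) (b := b)
  have hg : g ∈ Nset E a b := mem_N.2 ⟨C.hg, C.ag, C.bg⟩
  have d1 := card3 (G.unif _ C.hq)
  have d2 := card3 (G.unif _ C.hc)
  obtain ⟨r, ar, qr, k3⟩ := two_of (G.unif _ hk') ak' qk' d1.2.1
  have rk' : r ∈ k' := by rw [k3]; simp
  have rg : r ∈ g := by
    rcases sub r rk' with h | h
    · exact absurd h.symm ar
    · exact h
  have ck' : c ∉ k' := by
    intro h
    rcases sub c h with h | h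
    · exact d2.2.1 h.symm
    · exact C.cg h
  obtain ⟨s, qs, rs, g3⟩ := two_of (G.unif _ C.hg) C.qg rg qr
  have two : ∀ k ∈ Nset E a b, ∀ t, t = q ∨ t = r → t ∈ k → q ∈ k ∧ r ∈ k := by
    intro k hk t ht tk
    obtain ⟨hkE, ak, bk⟩ := mem_N.1 hk
    have tk' : t ∈ k' := by rcases ht with rfl | rfl <;> assumption
    obtain ⟨y, y1, y2, y3⟩ := twin G C.hc hk' hkE ak' bk' ck' ak bk tk' tk
    rw [k3] at y1
    simp only [Finset.mem_insert, Finset.mem_singleton] at y1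
    clear k3 g3 sub
    rcases ht with rfl | rfl <;> rcases y1 with rfl | rfl | rfl <;> tauto
  have all : ∀ k ∈ Nset E a b, ∀ t ∈ g, t ∈ k → q ∈ k ∧ r ∈ k := by
    intro k hk t tg tk
    by_cases ht : t = q ∨ t = r
    · exact two k hk t ht tk
    · obtain ⟨hkE, ak, bk⟩ := mem_N.1 hk
      obtain ⟨y, y1, y2, y3⟩ := key G C.hq C.hg hkE C.ag C.bg ak C.qg tg tk (by tauto)
      refine two k hk y ?_ y2
      rw [g3] at tg y1
      simp only [Finset.mem_insert, Finset.mem_singleton] at tg y1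
      clear k3 g3 sub two
      omega
  have : ∃ l ∈ Nset E a b, ∀ t ∈ g, t ∉ l := by
    by_contra hc
    push Not at hc
    obtain ⟨e1, h1, e2, h2, hd⟩ := hM
    obtain ⟨t1, i1, i2⟩ := hc e1 h1
    obtain ⟨t2, j1, j2⟩ := hc e2 h2
    exact hd q (all e1 h1 t1 i1 i2).1 (all e2 h2 t2 j1 j2).1
  obtain ⟨l, hl, hgl⟩ := this
  obtain ⟨k, hk, l', hl', hd', ⟨t, tk, tg⟩, ⟨z, zk, zl⟩⟩ := step GN.unif hs hg hl hgl
  obtain ⟨yk, yk'⟩ := all k hk t tg tk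
  obtain ⟨hkE, ak, bk⟩ := mem_N.1 hk
  obtain ⟨hlE, al, bl⟩ := mem_N.1 hl'
  have ql := hd' q C.qg
  have rl := hd' r rg
  have zq : z ≠ q := by rintro rfl; exact ql zl
  have zr : z ≠ r := by rintro rfl; exact rl zl
  have kk := three_of (G.unif _ hkE) yk yk' zk qr zq.symm zr.symm
  obtain ⟨y, y1, y2, y3⟩ := key G C.hq hkE hlE ak bk al yk zk zl zq
  rw [kk] at y1
  simp only [Finset.mem_insert, Finset.mem_singleton] at y1
  rcases y1 with rfl | rfl | rfl
  · exact ql y2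
  · exact rl y2
  · exact y3 rfl

lemma A_two (G : Good V E) (C : Conf E a b q c g) 
    (hs : ¬ Split (Nset E a b)) (hM : HasM (Nset E a b)) : (Aset E a b).card ≤ 2 := by
  have : Aset E a b ⊆ {insert a (g.erase q), {a, q, c}} := by
    intro k hk
    obtain ⟨hkE, ak, bk⟩ := mem_A.1 hk
    simp only [Finset.mem_insert, Finset.mem_singleton]
    rcases edgesA G C hkE ak bk with h | h | h
    · left; ext t; rw [h.2]; simp; tauto
    · right; exact h
    · exact (noAqr G C hs hM hkE ak bk h.1 h.2).elim
  exact (Finset.card_le_card this).trans Finset.card_le_two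

lemma Nset_comm : Nset E a b = Nset E b a := by
  ext k; simp only [mem_N]; tauto

lemma caseM {n : ℕ} (ih : ∀ m < n, Q m) (G : Good V E) (hV : V.card = n) (C : Conf E a b q c g)
    (nA : ∀ a b q w g h, ¬ Alpha E a b q w g h)
    (hs : ¬ Split (Nset E a b)) (hM : HasM (Nset E a b)) :
    E.card ≤ T n ∧ (11 ≤ n → E.card < T n) := by
  have h0 := count G C.hab
  have h1 := A_two G C hs hM
  have h2 := A_two G C.symm (Nset_comm ▸ hs) (Nset_comm ▸ hM)
  obtain ⟨hD, hc⟩ := D_card C.hab (G.sub _ C.hq (by simp)) (G.sub _ C.hq (by simp)) G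
  have qD : q ∈ Dset V E a b := (mem_D G).2 C.hq
  have cD : c ∈ Dset V E a b := (mem_D G).2 C.hc
  have hqc : q ≠ c := by rintro rfl; exact C.cg C.qg
  have d2 : 2 ≤ (Dset V E a b).card := by
    rw [← Finset.card_pair hqc]; apply Finset.card_le_card; grind
  have GN := G.N (a := a) (b := b)
  have GX : Good ((V \ {a, b}) \ (Dset V E a b).erase q) (Nset E a b) := by
    refine GN.mono (Finset.Subset.refl _) ?_
    intro e he t ht
    rw [Finset.mem_sdiff]
    refine ⟨GN.sub _ he ht, ?_⟩
    intro h'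
    rw [Finset.mem_erase, mem_D G] at h'
    exact h'.1 (DN G C nA hs hM h'.2 he ht)
  have hX : ((V \ {a, b}) \ (Dset V E a b).erase q).card = n - 1 - (Dset V E a b).card := by
    rw [Finset.card_sdiff_of_subset ((Finset.erase_subset _ _).trans hD),
      Finset.card_erase_of_mem qD]
    omega
  have h6 := six GX hM
  have hN := (ih (n - 1 - (Dset V E a b).card) (by omega) _ _ hX GX hM).1 hs
  have hT := T_mono (m := n - 1 - (Dset V E a b).card) (n := n) (by omega) (by omega)
  constructor
  · omega
  · intro h
    have := hT.2 (by omega)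
    omega
end PCM

namespace PCM
variable {V : Finset ℕ} {E : Finset (Finset ℕ)} {a b q c : ℕ} {g : Finset ℕ}

def TI (N : Finset (Finset ℕ)) : Prop :=
  ∀ e ∈ N, ∀ f ∈ N, ∃ x y, x ≠ y ∧ x ∈ e ∧ y ∈ e ∧ x ∈ f ∧ y ∈ f

/-- two pairs in a triple meet -/
lemma pig {e : Finset ℕ} (he : e.card = 3) {x y u v : ℕ} (hxy : x ≠ y) (huv : u ≠ v) (xe : x ∈ e)
    (ye : y ∈ e) (ue : u ∈ e) (ve : v ∈ e) : u = x ∨ u = y ∨ v = x ∨ v = y := by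
  obtain ⟨z, h1, h2, rfl⟩ := two_of he xe ye hxy
  simp only [Finset.mem_insert, Finset.mem_singleton] at ue ve
  omega

set_option maxHeartbeats 2000000 in
lemma TI_common {N : Finset (Finset ℕ)} (hu : ∀ e ∈ N, e.card = 3) (hN : TI N)
    (h1 : 2 ≤ N.card) :
    (∃ x y, x ≠ y ∧ ∀ k ∈ N, x ∈ k ∧ y ∈ k) ∨ N.card ≤ 4 := by
  by_contra hc
  push Not at hc
  obtain ⟨hc, h4⟩ := hc
  obtain ⟨e, he, f, hf, hef⟩ := Finset.one_lt_card.1 h1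
  have main : ∀ x y z w, x ≠ y → x ≠ z → x ≠ w → y ≠ z → y ≠ w → z ≠ w → {x, y, z} ∈ N →
      {x, y, w} ∈ N → ∀ h ∈ N, x ∉ h → False := by
    intro x y z w xy xz xw yz yw zw h1 h2 h hh xh
    obtain ⟨p, p', pp, i1, i2, i3, i4⟩ := hN _ h1 _ hh
    obtain ⟨r, r', rr, j1, j2, j3, j4⟩ := hN _ h2 _ hh
    have hy : y ∈ h := by
      simp only [Finset.mem_insert, Finset.mem_singleton] at i1 i2
      rcases i1 with rfl | rfl | rfl <;> rcases i2 with rfl | rfl | rfl <;> tauto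
    have hz : z ∈ h := by
      simp only [Finset.mem_insert, Finset.mem_singleton] at i1 i2
      rcases i1 with rfl | rfl | rfl <;> rcases i2 with rfl | rfl | rfl <;> tauto
    have hw : w ∈ h := by
      simp only [Finset.mem_insert, Finset.mem_singleton] at j1 j2
      rcases j1 with rfl | rfl | rfl <;> rcases j2 with rfl | rfl | rfl <;> tauto
    have h3 := three_of (hu _ hh) hy hz hw yz yw zw
    have sub : N ⊆ ({x, y, z, w} : Finset ℕ).powersetCard 3 := by
      intro k hk
      rw [Finset.mem_powersetCard]
      refine ⟨?_, hu _ hk⟩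
      intro u uk
      by_contra hu'
      simp only [Finset.mem_insert, Finset.mem_singleton, not_or] at hu'
      obtain ⟨u1, u2, u3, u4⟩ := hu'
      obtain ⟨s, t, us, ut, st, kk⟩ := one_of (hu _ hk) uk
      have two : ∀ e ∈ N, u ∉ e → s ∈ e ∧ t ∈ e := by
        intro e he ue
        obtain ⟨p, p', pp, i1, i2, i3, i4⟩ := hN _ hk _ he
        rw [kk] at i1 i2
        simp only [Finset.mem_insert, Finset.mem_singleton] at i1 i2
        rcases i1 with rfl | rfl | rfl <;> rcases i2 with rfl | rfl | rfl <;> tauto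
      have a1 := two _ h1 (by simp [*])
      have a2 := two _ h2 (by simp [*])
      have a3 := two _ hh (by rw [h3]; simp [*])
      rw [h3] at a3
      simp only [Finset.mem_insert, Finset.mem_singleton] at a1 a2 a3
      omega
    have := Finset.card_le_card sub
    rw [Finset.card_powersetCard] at this
    have h4' : ({x, y, z, w} : Finset ℕ).card ≤ 4 := Finset.card_le_four
    have := Nat.choose_le_choose 3 h4'
    rw [show Nat.choose 4 3 = 4 from rfl] at this
    omega
  obtain ⟨x, y, xy, xe, ye, xf, yf⟩ := hN e he f hf
  obtain ⟨z, xz, yz, rfl⟩ := two_of (hu _ he) xe ye xy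
  obtain ⟨w, xw, yw, rfl⟩ := two_of (hu _ hf) xf yf xy
  have zw : z ≠ w := by rintro rfl; exact hef rfl
  obtain ⟨k, hk, hk'⟩ := hc x y xy
  by_cases xk : x ∈ k
  · exact main y x z w xy.symm yz yw xz xw zw (ins_swap ▸ he) (ins_swap ▸ hf) k hk (hk' xk)
  · exact main x y z w xy xz xw yz yw zw he hf k hk xk

lemma common_card {W : Finset ℕ} {N : Finset (Finset ℕ)} (hu : ∀ e ∈ N, e.card = 3)
    (hW : ∀ e ∈ N, e ⊆ W) (hne : N.Nonempty) {x y : ℕ} (xy : x ≠ y)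
    (h : ∀ k ∈ N, x ∈ k ∧ y ∈ k) : N.card + 2 ≤ W.card := by
  have sub : N ⊆ (W \ {x, y}).image (fun t => {x, y, t}) := by
    intro k hk
    obtain ⟨t, h1, h2, rfl⟩ := two_of (hu _ hk) (h k hk).1 (h k hk).2 xy
    rw [Finset.mem_image]
    refine ⟨t, ?_, rfl⟩
    have : t ∈ W := hW _ hk (by simp)
    grind
  have h1 := (Finset.card_le_card sub).trans Finset.card_image_le
  obtain ⟨k, hk⟩ := hne
  have h2 : ({x, y} : Finset ℕ) ⊆ W := by
    intro t ht
    simp only [Finset.mem_insert, Finset.mem_singleton] at ht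
    rcases ht with rfl | rfl
    · exact hW _ hk (h k hk).1
    · exact hW _ hk (h k hk).2
  rw [Finset.card_sdiff_of_subset h2, Finset.card_pair xy] at h1
  have := Finset.card_le_card h2
  rw [Finset.card_pair xy] at this
  omega

lemma dich (G : Good V E) (C : Conf E a b q c g) (hI : ¬ HasM (Nset E a b)) :
    TI (Nset E a b) ∨ (∀ k ∈ Nset E a b, q ∈ k) ∧
      ∃ e1 ∈ Nset E a b, ∃ e2 ∈ Nset E a b, ∀ t ∈ e1, t ∈ e2 → t = q := by
  have hg : g ∈ Nset E a b := mem_N.2 ⟨C.hg, C.ag, C.bg⟩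
  have inter : ∀ e ∈ Nset E a b, ∀ f ∈ Nset E a b, ∃ t ∈ e, t ∈ f := by
    intro e he f hf
    by_contra hc
    push Not at hc
    exact hI ⟨e, he, f, hf, hc⟩
  by_cases hall : ∀ k ∈ Nset E a b, q ∈ k
  · by_cases hl : ∃ e1 ∈ Nset E a b, ∃ e2 ∈ Nset E a b, ∀ t ∈ e1, t ∈ e2 → t = q
    · exact Or.inr ⟨hall, hl⟩
    · left
      push Not at hl
      intro e he f hf
      obtain ⟨t, t1, t2, t3⟩ := hl e he f hf
      exact ⟨t, q, t3, t1, hall e he, t2, hall f hf⟩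
  · left
    push Not at hall
    obtain ⟨k, hk, qk⟩ := hall
    have two : ∀ e ∈ Nset E a b, q ∈ e → ∀ f ∈ Nset E a b, q ∉ f →
        ∃ x y, x ≠ y ∧ x ∈ e ∧ y ∈ e ∧ x ∈ f ∧ y ∈ f := by
      intro e he qe f hf qf
      obtain ⟨t, te, tf⟩ := inter e he f hf
      obtain ⟨heE, ae, be⟩ := mem_N.1 he
      obtain ⟨hfE, af, bf⟩ := mem_N.1 hf
      obtain ⟨y, y1, y2, y3⟩ := key G C.hq heE hfE ae be af qe te tf (by rintro rfl; exact qf tf)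
      exact ⟨t, y, y3.symm, te, y1, tf, y2⟩
    intro e he f hf
    have ue := G.unif _ (mem_N.1 he).1
    have uf := G.unif _ (mem_N.1 hf).1
    have uk := G.unif _ (mem_N.1 hk).1
    by_cases qe : q ∈ e <;> by_cases qf : q ∈ f
    · obtain ⟨x, y, xy, i1, i2, i3, i4⟩ := two e he qe k hk qk
      obtain ⟨u, v, uv, j1, j2, j3, j4⟩ := two f hf qf k hk qk
      have hne : ∀ t ∈ k, t ≠ q := by rintro t ht rfl; exact qk ht
      rcases pig uk xy uv i3 i4 j3 j4 with rfl | rfl | rfl | rfl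
      · exact ⟨u, q, hne _ j3, i1, qe, j1, qf⟩
      · exact ⟨u, q, hne _ j3, i2, qe, j1, qf⟩
      · exact ⟨v, q, hne _ j4, i1, qe, j2, qf⟩
      · exact ⟨v, q, hne _ j4, i2, qe, j2, qf⟩
    · exact two e he qe f hf qf
    · obtain ⟨x, y, xy, i1, i2, i3, i4⟩ := two f hf qf e he qe
      exact ⟨x, y, xy, i3, i4, i1, i2⟩
    · obtain ⟨x, y, xy, i1, i2, i3, i4⟩ := two g hg C.qg e he qe
      obtain ⟨u, v, uv, j1, j2, j3, j4⟩ := two g hg C.qg f hf qf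
      have hq1 : ∀ t ∈ e, t ≠ q := by rintro t ht rfl; exact qe ht
      have hq2 : ∀ t ∈ f, t ≠ q := by rintro t ht rfl; exact qf ht
      have g3 := three_of (G.unif _ C.hg) C.qg i1 i2 (hq1 _ i3).symm (hq1 _ i4).symm xy
      rw [g3] at j1 j2
      simp only [Finset.mem_insert, Finset.mem_singleton] at j1 j2
      have := hq2 _ j3
      have := hq2 _ j4
      refine ⟨x, y, xy, i3, i4, ?_⟩
      clear two inter g3 hq1 hq2
      rcases j1 with rfl | rfl | rfl <;> rcases j2 with rfl | rfl | rfl <;> tauto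
end PCM

namespace PCM
variable {V : Finset ℕ} {E : Finset (Finset ℕ)} {a b q c : ℕ} {g : Finset ℕ}

/-- edges through `a` avoiding `b`, other than `aqc`. -/
def A' (E : Finset (Finset ℕ)) (a b q c : ℕ) : Finset (Finset ℕ) :=
  (Aset E a b).filter (fun k => k ≠ {a, q, c})

lemma mem_A' {k : Finset ℕ} : k ∈ A' E a b q c ↔ (k ∈ E ∧ a ∈ k ∧ b ∉ k) ∧ k ≠ {a, q, c} := by
  rw [A', Finset.mem_filter, mem_A]

lemma A'_sub (G : Good V E) (C : Conf E a b q c g) {k : Finset ℕ} (hk : k ∈ A' E a b q c) :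
    ∃ x y, x ≠ y ∧ x ≠ a ∧ y ≠ a ∧ x ∈ g ∧ y ∈ g ∧ k = {a, x, y} ∧ c ∉ k := by
  obtain ⟨⟨hkE, ak, bk⟩, hne⟩ := mem_A'.1 hk
  obtain ⟨x, y, ax, ay, xy, k3⟩ := one_of (G.unif _ hkE) ak
  have d2 := card3 (G.unif _ C.hc)
  have sub : ∀ t ∈ k, t = a ∨ t ∈ g := by
    intro t ht
    rcases edgesA G C hkE ak bk with h | h | h
    · have := (h.2 t).1 ht; tauto
    · exact absurd h hne
    · exact h.2 t ht
  refine ⟨x, y, xy, ax.symm, ay.symm, ?_, ?_, k3, ?_⟩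
  · exact (sub x (by rw [k3]; simp)).resolve_left ax.symm
  · exact (sub y (by rw [k3]; simp)).resolve_left ay.symm
  · intro h
    rcases sub c h with h | h
    · exact d2.2.1 h.symm
    · exact C.cg h

lemma A'_card (G : Good V E) (C : Conf E a b q c g) : (A' E a b q c).card ≤ 3 := by
  have sub : A' E a b q c ⊆ (g.powersetCard 2).image (insert a) := by
    intro k hk
    obtain ⟨x, y, xy, xa, ya, xg, yg, rfl, _⟩ := A'_sub G C hk
    rw [Finset.mem_image]
    refine ⟨{x, y}, ?_, rfl⟩
    rw [Finset.mem_powersetCard]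
    refine ⟨?_, Finset.card_pair xy⟩
    grind
  have := (Finset.card_le_card sub).trans Finset.card_image_le
  rw [Finset.card_powersetCard, G.unif _ C.hg] at this
  exact this

lemma A_A' : (Aset E a b).card ≤ (A' E a b q c).card + (if {a, q, c} ∈ E then 1 else 0) := by
  split_ifs with h
  · have : Aset E a b ⊆ A' E a b q c ∪ {{a, q, c}} := by
      intro k hk
      rw [Finset.mem_union, Finset.mem_singleton, mem_A']
      have := mem_A.1 hk
      tauto
    exact (Finset.card_le_card this).trans (Finset.card_union_le _ _)
  · apply Finset.card_le_card
    intro k hk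
    rw [mem_A']
    have := mem_A.1 hk
    refine ⟨this, ?_⟩
    rintro rfl
    exact h this.1

lemma one_le_of {N : Finset (Finset ℕ)} (h : ∀ k ∈ N, ∀ k' ∈ N, k = k') : N.card ≤ 1 :=
  Finset.card_le_one.2 h

lemma A'_rel (G : Good V E) (C : Conf E a b q c g) {l : Finset ℕ} (hl : l ∈ A' E b a q c) :
    (A' E a b q c).card ≤ 1 := by
  apply one_le_of
  obtain ⟨_, _, _, _, _, _, _, _, cl⟩ := A'_sub G C.symm hl
  obtain ⟨⟨hlE, bl, al⟩, _⟩ := mem_A'.1 hl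
  have : ∀ k ∈ A' E a b q c, k = insert a (l.erase b) := by
    intro k hk
    obtain ⟨_, _, _, _, _, _, _, _, ck⟩ := A'_sub G C hk
    obtain ⟨⟨hkE, ak, bk⟩, _⟩ := mem_A'.1 hk
    have h1 := abrel G C.hc hkE hlE ak bk ck al bl cl
    apply Finset.eq_of_subset_of_card_le
    · intro t ht
      by_cases hta : t = a
      · simp [hta]
      · have := h1 t ht hta
        have htb : t ≠ b := by rintro rfl; exact bk ht
        exact Finset.mem_insert_of_mem (Finset.mem_erase.2 ⟨htb, this⟩)
    · rw [G.unif _ hkE]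
      have := Finset.card_insert_le a (l.erase b)
      rw [Finset.card_erase_of_mem bl, G.unif _ hlE] at this
      exact this
  intro k hk k' hk'
  rw [this k hk, this k' hk']

lemma A'_sum (G : Good V E) (C : Conf E a b q c g) :
    (A' E a b q c).card + (A' E b a q c).card ≤ 3 := by
  have h1 := A'_card G C
  have h2 := A'_card G C.symm
  rcases (A' E a b q c).eq_empty_or_nonempty with h | ⟨k, hk⟩
  · rw [h, Finset.card_empty]; omega
  · rcases (A' E b a q c).eq_empty_or_nonempty with h' | ⟨k', hk'⟩
    · rw [h', Finset.card_empty]; omega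
    · have := A'_rel G C hk'
      have := A'_rel G C.symm hk
      omega

lemma aqcD (G : Good V E) (C : Conf E a b q c g) (h : {a, q, c} ∈ E) :
    Dset V E a b = {q, c} := by
  ext w
  rw [mem_D G, Finset.mem_insert, Finset.mem_singleton]
  constructor
  · intro hw
    by_contra hne
    push Not at hne
    have d1 := card3 (G.unif _ C.hq)
    have d2 := card3 (G.unif _ C.hc)
    have d3 := card3 (G.unif _ hw)
    obtain ⟨y, y1, y2, y3⟩ := twin G hw h C.hg (by simp) (by simp; tauto) (by simp; tauto) C.ag C.bg
      (by simp : q ∈ ({a, q, c} : Finset ℕ)) C.qg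
    simp only [Finset.mem_insert, Finset.mem_singleton] at y1
    rcases y1 with rfl | rfl | rfl
    · exact C.ag y2
    · exact y3 rfl
    · exact C.cg y2
  · rintro (rfl | rfl)
    · exact C.hq
    · exact C.hc

lemma D_comm : Dset V E a b = Dset V E b a := by
  rw [Dset, Dset]; congr 1; ext w; rw [ins_swap]

lemma A'_pair (G : Good V E) (C : Conf E a b q c g) (hT : TI (Nset E a b)) {k : Finset ℕ}
    (hk : k ∈ A' E a b q c) : ∃ x y, x ≠ y ∧ x ∈ g ∧ y ∈ g ∧ k = {a, x, y} ∧
      ∀ f ∈ Nset E a b, x ∈ f ∧ y ∈ f := by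
  obtain ⟨x, y, xy, xa, ya, xg, yg, k3, ck⟩ := A'_sub G C hk
  obtain ⟨⟨hkE, ak, bk⟩, hne⟩ := mem_A'.1 hk
  refine ⟨x, y, xy, xg, yg, k3, ?_⟩
  intro f hf
  have hg : g ∈ Nset E a b := mem_N.2 ⟨C.hg, C.ag, C.bg⟩
  obtain ⟨hfE, af, bf⟩ := mem_N.1 hf
  obtain ⟨u, v, uv, u1, v1, u2, v2⟩ := hT g hg f hf
  have : ∃ t, (t = x ∨ t = y) ∧ t ∈ f := by
    rcases pig (G.unif _ C.hg) xy uv xg yg u1 v1 with rfl | rfl | rfl | rfl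
    · exact ⟨u, by tauto, u2⟩
    · exact ⟨u, by tauto, u2⟩
    · exact ⟨v, by tauto, v2⟩
    · exact ⟨v, by tauto, v2⟩
  obtain ⟨t, t1, t2⟩ := this
  have tk : t ∈ k := by rw [k3]; rcases t1 with rfl | rfl <;> simp
  obtain ⟨s, s1, s2, s3⟩ := twin G C.hc hkE hfE ak bk ck af bf tk t2
  rw [k3] at s1
  simp only [Finset.mem_insert, Finset.mem_singleton] at s1
  clear k3
  rcases t1 with rfl | rfl <;> rcases s1 with rfl | rfl | rfl <;> tauto

lemma A'_one (G : Good V E) (C : Conf E a b q c g) (hT : TI (Nset E a b))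
    (h2 : 2 ≤ (Nset E a b).card) : (A' E a b q c).card ≤ 1 := by
  apply one_le_of
  have hg : g ∈ Nset E a b := mem_N.2 ⟨C.hg, C.ag, C.bg⟩
  obtain ⟨f, hf, hfg⟩ := Finset.exists_mem_ne h2 g
  have hfE := (mem_N.1 hf).1
  intro k hk k' hk'
  obtain ⟨x, y, xy, xg, yg, k3, h1⟩ := A'_pair G C hT hk
  obtain ⟨u, v, uv, ug, vg, k3', h1'⟩ := A'_pair G C hT hk'
  obtain ⟨xf, yf⟩ := h1 f hf
  obtain ⟨uf, vf⟩ := h1' f hf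
  obtain ⟨z, xz, yz, g3⟩ := two_of (G.unif _ C.hg) xg yg xy
  have zf : z ∉ f := by
    intro zf
    exact hfg (by rw [g3, three_of (G.unif _ hfE) xf yf zf xy xz yz])
  have uz : u ≠ z := by rintro rfl; exact zf uf
  have vz : v ≠ z := by rintro rfl; exact zf vf
  rw [g3] at ug vg
  simp only [Finset.mem_insert, Finset.mem_singleton] at ug vg
  rw [k3, k3']
  rcases ug with rfl | rfl | rfl <;> rcases vg with rfl | rfl | rfl <;>
    first | rfl | (exfalso; tauto) | (ext t; simp only [Finset.mem_insert, Finset.mem_singleton]; tauto)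

lemma caseTI (G : Good V E) (C : Conf E a b q c g) (hT : TI (Nset E a b)) (h6 : 6 ≤ V.card) :
    E.card ≤ 2 * V.card - 4 := by
  have hg : g ∈ Nset E a b := mem_N.2 ⟨C.hg, C.ag, C.bg⟩
  have h0 := count G C.hab
  have hA : (Aset E a b).card ≤ (A' E a b q c).card + (if {a, q, c} ∈ E then 1 else 0) := A_A'
  have hB : (Aset E b a).card ≤ (A' E b a q c).card + (if {b, q, c} ∈ E then 1 else 0) := A_A'
  have h3 := A'_sum G C
  obtain ⟨hD, hc⟩ := D_card C.hab (G.sub _ C.hq (by simp)) (G.sub _ C.hq (by simp)) G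
  have hD' := Finset.card_le_card hD
  have hDD : (Dset V E a b).card + (if {a, q, c} ∈ E then 1 else 0)
      + (if {b, q, c} ∈ E then 1 else 0) ≤ max 4 (V.card - 2) := by
    have e1 : ({a, q, c} ∈ E ∨ {b, q, c} ∈ E) → (Dset V E a b).card ≤ 2 := by
      intro h
      have : Dset V E a b = {q, c} := by
        rcases h with h | h
        · exact aqcD G C h
        · rw [D_comm]; exact aqcD G C.symm h
      rw [this]; exact Finset.card_le_two
    split_ifs at * <;> simp_all <;> omega
  have GN := G.N (a := a) (b := b)
  have hpos : 1 ≤ (Nset E a b).card := Finset.card_pos.2 ⟨g, hg⟩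
  by_cases h2 : 2 ≤ (Nset E a b).card
  · have k1 := A'_one G C hT h2
    have k2 := A'_one G C.symm (Nset_comm ▸ hT) (Nset_comm ▸ h2)
    by_cases hcom : ∃ x y, x ≠ y ∧ ∀ k ∈ Nset E a b, x ∈ k ∧ y ∈ k
    · obtain ⟨x, y, xy, h⟩ := hcom
      have := common_card GN.unif GN.sub ⟨g, hg⟩ xy h
      omega
    · have z1 : A' E a b q c = ∅ := by
        rw [Finset.eq_empty_iff_forall_notMem]
        intro k hk
        obtain ⟨x, y, xy, _, _, _, h⟩ := A'_pair G C hT hk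
        exact hcom ⟨x, y, xy, h⟩
      have z2 : A' E b a q c = ∅ := by
        rw [Finset.eq_empty_iff_forall_notMem]
        intro k hk
        obtain ⟨x, y, xy, _, _, _, h⟩ := A'_pair G C.symm (Nset_comm ▸ hT) hk
        rw [Nset_comm] at h
        exact hcom ⟨x, y, xy, h⟩
      rw [z1] at hA
      rw [z2] at hB
      rw [Finset.card_empty] at hA hB
      have := (TI_common GN.unif hT h2).resolve_left hcom
      omega
  · omega
end PCM

namespace PCM
variable {V : Finset ℕ} {E : Finset (Finset ℕ)} {a b q c : ℕ} {g : Finset ℕ}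

def IsComet (V : Finset ℕ) (E : Finset (Finset ℕ)) : Prop :=
  ∃ q a b c, q ≠ a ∧ q ≠ b ∧ q ≠ c ∧ a ≠ b ∧ a ≠ c ∧ b ≠ c ∧ q ∈ V ∧ a ∈ V ∧ b ∈ V ∧ c ∈ V ∧
    ∀ e, e ∈ E ↔ (e ∈ ({q, a, b, c} : Finset ℕ).powersetCard 3 ∨
      (e.card = 3 ∧ q ∈ e ∧ e ⊆ V ∧ a ∉ e ∧ b ∉ e ∧ c ∉ e))

lemma linkD (G : Good V E) (C : Conf E a b q c g) (hall : ∀ k ∈ Nset E a b, q ∈ k)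
    {e1 e2 : Finset ℕ} (h1 : e1 ∈ Nset E a b) (h2 : e2 ∈ Nset E a b)
    (hl : ∀ t ∈ e1, t ∈ e2 → t = q) {w : ℕ} (hw : {a, b, w} ∈ E) {h : Finset ℕ}
    (hh : h ∈ Nset E a b) (wh : w ∈ h) : w = q := by
  by_contra hne
  obtain ⟨hhE, ah, bh⟩ := mem_N.1 hh
  obtain ⟨h1E, a1, b1⟩ := mem_N.1 h1
  obtain ⟨h2E, a2, b2⟩ := mem_N.1 h2
  have q1 := hall _ h1
  have q2 := hall _ h2
  have qh := hall _ hh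
  obtain ⟨y, y1, y2, y3⟩ := key G hw hhE h1E ah bh a1 wh qh q1 (Ne.symm hne)
  obtain ⟨z, z1, z2, z3⟩ := key G hw hhE h2E ah bh a2 wh qh q2 (Ne.symm hne)
  have yz : y ≠ z := by rintro rfl; exact y3 (hl _ y2 z2)
  have h3 := three_of (G.unif _ hhE) qh y1 z1 y3.symm z3.symm yz
  rw [h3] at wh
  simp only [Finset.mem_insert, Finset.mem_singleton] at wh
  rcases wh with rfl | rfl | rfl
  · exact hne rfl
  · obtain ⟨t, t1, t2, t3⟩ := key G hw h1E h2E a1 b1 a2 y2 q1 q2 (Ne.symm hne)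
    exact t3 (hl t t1 t2)
  · obtain ⟨t, t1, t2, t3⟩ := key G hw h2E h1E a2 b2 a1 z2 q2 q1 (Ne.symm hne)
    exact t3 (hl t t2 t1)

lemma linkA (G : Good V E) {e1 e2 : Finset ℕ} (C1 : Conf E a b q c e1) (C2 : Conf E a b q c e2)
    (hl : ∀ t ∈ e1, t ∈ e2 → t = q) : ∀ k ∈ Aset E a b, k = {a, q, c} := by
  intro k hk
  obtain ⟨hkE, ak, bk⟩ := mem_A.1 hk
  obtain ⟨x, y, ax, ay, xy, k3⟩ := one_of (G.unif _ hkE) ak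
  have xk : x ∈ k := by rw [k3]; simp
  have yk : y ∈ k := by rw [k3]; simp
  have i1 := edgesA G C1 hkE ak bk
  have i2 := edgesA G C2 hkE ak bk
  by_contra hne
  have s1 : ∀ t ∈ k, t = a ∨ t ∈ e1 := by
    intro t ht
    rcases i1 with h | h | h
    · have := (h.2 t).1 ht; tauto
    · exact absurd h hne
    · exact h.2 t ht
  have s2 : ∀ t ∈ k, t = a ∨ t ∈ e2 := by
    intro t ht
    rcases i2 with h | h | h
    · have := (h.2 t).1 ht; tauto
    · exact absurd h hne
    · exact h.2 t ht
  have xq := hl x ((s1 x xk).resolve_left ax.symm) ((s2 x xk).resolve_left ax.symm)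
  have yq := hl y ((s1 y yk).resolve_left ay.symm) ((s2 y yk).resolve_left ay.symm)
  exact xy (xq.trans yq.symm)

lemma caseLink (G : Good V E) (C : Conf E a b q c g) (hall : ∀ k ∈ Nset E a b, q ∈ k)
    {e1 e2 : Finset ℕ} (h1 : e1 ∈ Nset E a b) (h2 : e2 ∈ Nset E a b)
    (hl : ∀ t ∈ e1, t ∈ e2 → t = q) :
    E.card ≤ 4 + (V.card - 4).choose 2 ∧ (E.card = 4 + (V.card - 4).choose 2 → IsComet V E) := by
  have GN := G.N (a := a) (b := b)
  obtain ⟨h1E, a1, b1⟩ := mem_N.1 h1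
  obtain ⟨h2E, a2, b2⟩ := mem_N.1 h2
  have q1 := hall _ h1
  have q2 := hall _ h2
  have hqc : q ≠ c := by rintro rfl; exact C.cg C.qg
  have ND : ∀ w, {a, b, w} ∈ E → ∀ h ∈ Nset E a b, w ∈ h → w = q := fun w hw h hh wh =>
    linkD G C hall h1 h2 hl hw hh wh
  have cN : ∀ k ∈ Nset E a b, c ∉ k := fun k hk ck => hqc (ND c C.hc k hk ck).symm
  have C1 : Conf E a b q c e1 := ⟨C.hab, C.hq, C.hc, h1E, a1, b1, q1, cN _ h1⟩
  have C2 : Conf E a b q c e2 := ⟨C.hab, C.hq, C.hc, h2E, a2, b2, q2, cN _ h2⟩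
  have hA := linkA G C1 C2 hl
  have hB := linkA G C1.symm C2.symm hl
  have h0 := count G C.hab
  obtain ⟨hD, hc⟩ := D_card C.hab (G.sub _ C.hq (by simp)) (G.sub _ C.hq (by simp)) G
  have qD : q ∈ Dset V E a b := (mem_D G).2 C.hq
  have cD : c ∈ Dset V E a b := (mem_D G).2 C.hc
  have d2 : 2 ≤ (Dset V E a b).card := by
    rw [← Finset.card_pair hqc]; apply Finset.card_le_card; grind
  have hDl := Finset.card_le_card hD
  have subX : ∀ k ∈ Nset E a b, k.erase q ⊆ (V \ {a, b}) \ Dset V E a b := by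
    intro k hk t ht
    rw [Finset.mem_erase] at ht
    rw [Finset.mem_sdiff, mem_D G]
    exact ⟨GN.sub _ hk ht.2, fun h => ht.1 (ND t h k hk ht.2)⟩
  have hX : ((V \ {a, b}) \ Dset V E a b).card = V.card - 2 - (Dset V E a b).card := by
    rw [Finset.card_sdiff_of_subset hD]
    omega
  have hX4 : 4 ≤ ((V \ {a, b}) \ Dset V E a b).card := by
    have i1 : (e1.erase q).card = 2 := by rw [Finset.card_erase_of_mem q1, G.unif _ h1E]
    have i2 : (e2.erase q).card = 2 := by rw [Finset.card_erase_of_mem q2, G.unif _ h2E]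
    have i3 : Disjoint (e1.erase q) (e2.erase q) := by
      rw [Finset.disjoint_left]
      intro t ht ht'
      rw [Finset.mem_erase] at ht ht'
      exact ht.1 (hl t ht.2 ht'.2)
    have := Finset.card_le_card (Finset.union_subset (subX _ h1) (subX _ h2))
    rw [Finset.card_union_of_disjoint i3] at this
    omega
  have subN : Nset E a b ⊆ (((V \ {a, b}) \ Dset V E a b).powersetCard 2).image (insert q) := by
    intro k hk
    rw [Finset.mem_image]
    refine ⟨k.erase q, ?_, Finset.insert_erase (hall k hk)⟩
    rw [Finset.mem_powersetCard]
    exact ⟨subX k hk, by rw [Finset.card_erase_of_mem (hall k hk), GN.unif _ hk]⟩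
  have cImg : ((((V \ {a, b}) \ Dset V E a b).powersetCard 2).image (insert q)).card ≤
      (V.card - 2 - (Dset V E a b).card).choose 2 := by
    rw [← hX, ← Finset.card_powersetCard]; exact Finset.card_image_le
  have hN := (Finset.card_le_card subN).trans cImg
  have hA1 : (Aset E a b).card ≤ 1 := one_le_of fun k hk k' hk' => by rw [hA k hk, hA k' hk']
  have hB1 : (Aset E b a).card ≤ 1 := one_le_of fun k hk k' hk' => by rw [hB k hk, hB k' hk']
  by_cases hDD : {a, q, c} ∈ E ∨ {b, q, c} ∈ E
  · have hDe : Dset V E a b = {q, c} := by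
      rcases hDD with h | h
      · exact aqcD G C h
      · rw [D_comm]; exact aqcD G C.symm h
    have hd : (Dset V E a b).card = 2 := by rw [hDe, Finset.card_pair hqc]
    rw [hd, show V.card - 2 - 2 = V.card - 4 by omega] at hN cImg
    refine ⟨by omega, ?_⟩
    intro heq
    have hAp : 0 < (Aset E a b).card := by omega
    have hBp : 0 < (Aset E b a).card := by omega
    have aqc : {a, q, c} ∈ E := by
      obtain ⟨k, hk⟩ := Finset.card_pos.1 hAp
      rw [← hA k hk]; exact (mem_A.1 hk).1
    have bqc : {b, q, c} ∈ E := by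
      obtain ⟨k, hk⟩ := Finset.card_pos.1 hBp
      rw [← hB k hk]; exact (mem_A.1 hk).1
    have hNe : Nset E a b = _ := Finset.eq_of_subset_of_card_le subN (by omega)
    have t1 := card3 (G.unif _ C.hq)
    have t2 := card3 (G.unif _ C.hc)
    refine ⟨q, a, b, c, t1.2.1.symm, t1.2.2.symm, hqc, t1.1, t2.2.1, t2.2.2,
      G.sub _ C.hq (by simp), G.sub _ C.hq (by simp), G.sub _ C.hq (by simp),
      G.sub _ C.hc (by simp), ?_⟩
    intro e
    constructor
    · intro he
      by_cases ae : a ∈ e <;> by_cases be : b ∈ e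
      · left
        obtain ⟨w, _, _, rfl⟩ := two_of (G.unif _ he) ae be C.hab
        have : w ∈ Dset V E a b := (mem_D G).2 he
        rw [hDe] at this
        rw [Finset.mem_powersetCard]
        refine ⟨?_, G.unif _ he⟩
        grind
      · left
        have := hA e (mem_A.2 ⟨he, ae, be⟩)
        rw [Finset.mem_powersetCard]
        refine ⟨?_, G.unif _ he⟩
        rw [this]; grind
      · left
        have := hB e (mem_A.2 ⟨he, be, ae⟩)
        rw [Finset.mem_powersetCard]
        refine ⟨?_, G.unif _ he⟩
        rw [this]; grind
      · right
        have hk : e ∈ Nset E a b := mem_N.2 ⟨he, ae, be⟩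
        exact ⟨G.unif _ he, hall _ hk, G.sub _ he, ae, be, cN _ hk⟩
    · rintro (h | ⟨e3, qe, eV, ae, be, ce⟩)
      · rw [Finset.mem_powersetCard] at h
        obtain ⟨hsub, e3⟩ := h
        have hm : ∀ t ∈ e, t = q ∨ t = a ∨ t = b ∨ t = c := by
          intro t ht
          have := hsub ht
          simpa using this
        by_cases ae : a ∈ e <;> by_cases be : b ∈ e
        · obtain ⟨w, i1, i2, rfl⟩ := two_of e3 ae be C.hab
          rcases hm w (by simp) with rfl | rfl | rfl | rfl
          · exact C.hq
          · exact absurd rfl i1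
          · exact absurd rfl i2
          · exact C.hc
        · have : e ⊆ {a, q, c} := by
            intro t ht
            rcases hm t ht with rfl | rfl | rfl | rfl
            · simp
            · simp
            · exact absurd ht be
            · simp
          rw [Finset.eq_of_subset_of_card_le this (by rw [e3]; exact Finset.card_le_three)]
          exact aqc
        · have : e ⊆ {b, q, c} := by
            intro t ht
            rcases hm t ht with rfl | rfl | rfl | rfl
            · simp
            · exact absurd ht ae
            · simp
            · simp
          rw [Finset.eq_of_subset_of_card_le this (by rw [e3]; exact Finset.card_le_three)]
          exact bqc
        · have : e ⊆ {q, c} := by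
            intro t ht
            rcases hm t ht with rfl | rfl | rfl | rfl
            · simp
            · exact absurd ht ae
            · exact absurd ht be
            · simp
          have := Finset.card_le_card this
          have : ({q, c} : Finset ℕ).card ≤ 2 := Finset.card_le_two
          omega
      · have : e ∈ Nset E a b := by
          rw [hNe, Finset.mem_image]
          refine ⟨e.erase q, ?_, Finset.insert_erase qe⟩
          rw [Finset.mem_powersetCard, Finset.card_erase_of_mem qe, e3]
          refine ⟨?_, rfl⟩
          intro t ht
          rw [Finset.mem_erase] at ht
          have := eV ht.2
          have ta : t ≠ a := by rintro rfl; exact ae ht.2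
          have tb : t ≠ b := by rintro rfl; exact be ht.2
          have tc : t ≠ c := by rintro rfl; exact ce ht.2
          rw [hDe]
          simp [this, ta, tb, tc, ht.1]
        exact (mem_N.1 this).1
  · push Not at hDD
    have zA : Aset E a b = ∅ := by
      rw [Finset.eq_empty_iff_forall_notMem]
      intro k hk
      exact hDD.1 (hA k hk ▸ (mem_A.1 hk).1)
    have zB : Aset E b a = ∅ := by
      rw [Finset.eq_empty_iff_forall_notMem]
      intro k hk
      exact hDD.2 (hB k hk ▸ (mem_A.1 hk).1)
    rw [zA, zB, Finset.card_empty] at h0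
    have := star_num d2 (M := V.card - 2 - (Dset V E a b).card) (by omega)
    rw [show V.card - 2 - (Dset V E a b).card + (Dset V E a b).card - 2 = V.card - 4 by omega] at this
    exact ⟨by omega, by omega⟩

lemma lin_lt {n : ℕ} (h : 10 ≤ n) : 2 * n - 4 < T n := by
  have := (T_mono (m := 9) (n := n) (by omega) (by omega)).2 h
  rw [show T 9 = 14 by decide] at this
  omega

lemma nonsplit {n : ℕ} (ih : ∀ m < n, Q m) (G : Good V E) (hV : V.card = n) (hs : ¬ Split E)
    (hM : HasM E) : E.card ≤ T n ∧ (11 ≤ n → E.card = T n → IsComet V E) := by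
  by_cases hA : ∃ a b q w g h, Alpha E a b q w g h
  · obtain ⟨a, b, q, w, g, h, A⟩ := hA
    have := alphaBound ih G hV A
    exact ⟨this.1, fun h e => absurd e (this.2 h).ne⟩
  push Not at hA
  obtain ⟨a, b, q, c, g, C⟩ := confExists G hs hM
  have hsN : ¬ Split (Nset E a b) := by
    intro h
    obtain ⟨_, _, _, _, A⟩ := nSplit G hs C h
    exact hA _ _ _ _ _ _ A
  by_cases hMN : HasM (Nset E a b)
  · have := caseM ih G hV C hA hsN hMN
    exact ⟨this.1, fun h e => absurd e (this.2 h).ne⟩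
  rcases dich G C hMN with hT | ⟨hall, e1, h1, e2, h2, hl⟩
  · have h := caseTI G C hT (six G hM)
    rw [hV] at h
    refine ⟨h.trans (T_lin n), fun h' e => ?_⟩
    have := lin_lt (n := n) (by omega)
    omega
  · have h := caseLink G C hall h1 h2 hl
    rw [hV] at h
    refine ⟨h.1.trans (T_ch n), fun h' e => h.2 ?_⟩
    rw [e, T_eq (by omega)]

lemma T_le_hb (n : ℕ) : T n ≤ hb n := by
  unfold hb
  split_ifs with h
  · subst h; decide
  · exact le_rfl

lemma Q_all (n : ℕ) : Q n := by
  induction n using Nat.strong_induction_on with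
  | _ n ih =>
    intro V E hV G hM
    refine ⟨fun hs => (nonsplit ih G hV hs hM).1, ?_⟩
    by_cases hs : Split E
    · obtain ⟨i, j, hi, hj, hij, h⟩ := splitBound ih G hV.le hs
      have := (num hi hj).2.2.1
      rw [hij, hV] at this
      omega
    · exact (nonsplit ih G hV hs hM).1.trans (T_le_hb n)

lemma extremal {n : ℕ} (hn : 11 ≤ n) (G : Good V E) (hV : V.card = n) (hM : HasM E)
    (h : E.card = 4 + (n - 4).choose 2) : IsComet V E := by
  have hT := T_eq (n := n) (by omega)
  by_cases hs : Split E
  · obtain ⟨i, j, hi, hj, hij, h'⟩ := splitBound (fun m _ => Q_all m) G hV.le hs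
    have := (num hi hj).2.2.2 (by omega)
    rw [hij, hV, hb, if_neg (by omega)] at this
    omega
  · exact (nonsplit (fun m _ => Q_all m) G hV hs hM).2 hn (by omega)
end PCM

namespace PCM
open ThreeGraph

def F7 (x0 x1 x2 x3 x4 x5 x6 : ℕ) : ℕ → ℕ
  | 0 => x0
  | 1 => x1
  | 2 => x2
  | 3 => x3
  | 4 => x4
  | 5 => x5
  | _ => x6

set_option maxHeartbeats 1000000 in
lemma toPC {H : ThreeGraph} (hv : H.IsValid) (hP : H.Free pathP) (hC : H.Free triangleC) :
    PC H.edges := by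
  intro e he f hf g hg p q pq pe pf hef qf qg hfg t te tp
  by_contra tg
  obtain ⟨y, pt', ty, rfl⟩ := two_of (hv _ he).1 pe te tp.symm
  obtain ⟨z, pz, qz, rfl⟩ := two_of (hv _ hf).1 pf qf pq
  have v1 := (hv _ he).2
  have v2 := (hv _ hf).2
  have v3 := (hv _ hg).2
  have m1 : p ∈ H.verts := v1 (by simp)
  have m2 : t ∈ H.verts := v1 (by simp)
  have m3 : y ∈ H.verts := v1 (by simp)
  have m4 : q ∈ H.verts := v2 (by simp)
  have m5 : z ∈ H.verts := v2 (by simp)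
  have pg : p ∉ g := fun h => pq (hfg p (by simp) h)
  have zg : z ∉ g := fun h => qz (hfg z (by simp) h).symm
  have tq : t ≠ q := by rintro rfl; exact tg qg
  have tz : t ≠ z := by rintro rfl; exact tp (hef t (by simp) (by simp))
  have yq : y ≠ q := by rintro rfl; exact pt' (hef y (by simp) (by simp)).symm
  have yz : y ≠ z := by rintro rfl; exact pt' (hef y (by simp) (by simp)).symm
  by_cases yg : y ∈ g
  · obtain ⟨v, i1, i2, rfl⟩ := two_of (hv _ hg).1 qg yg yq.symm
    have m6 : v ∈ H.verts := v3 (by simp)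
    simp only [Finset.mem_insert, Finset.mem_singleton, not_or] at pg zg tg
    obtain ⟨_, _, _⟩ := pg
    obtain ⟨_, _, _⟩ := zg
    obtain ⟨_, _, _⟩ := tg
    apply hC
    refine ⟨F7 y t p z q v 0, ?_, ?_, ?_⟩
    · intro i hi j hj hij
      simp only [triangleC, Finset.coe_insert, Finset.coe_singleton, Set.mem_insert_iff,
        Set.mem_singleton_iff] at hi hj
      rcases hi with rfl | rfl | rfl | rfl | rfl | rfl <;>
      rcases hj with rfl | rfl | rfl | rfl | rfl | rfl <;>
      simp only [F7] at hij <;> first | rfl | (exact absurd hij (by assumption)) | (exact absurd hij.symm (by assumption))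
    · intro i hi
      simp only [triangleC, Finset.mem_insert, Finset.mem_singleton] at hi
      rcases hi with rfl | rfl | rfl | rfl | rfl | rfl <;> simpa only [F7]
    · intro i hi
      simp only [triangleC, Finset.mem_insert, Finset.mem_singleton] at hi
      rcases hi with rfl | rfl | rfl <;>
        simp only [Finset.image_insert, Finset.image_singleton, F7]
      · convert he using 1; ext s; simp; tauto
      · convert hf using 1; ext s; simp; tauto
      · convert hg using 1; ext s; simp; tauto
  · obtain ⟨u, v, i1, i2, i3, rfl⟩ := one_of (hv _ hg).1 qg
    have m6 : v ∈ H.verts := v3 (by simp)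
    have m7 : u ∈ H.verts := v3 (by simp)
    simp only [Finset.mem_insert, Finset.mem_singleton, not_or] at pg zg tg yg
    obtain ⟨_, _, _⟩ := pg
    obtain ⟨_, _, _⟩ := zg
    obtain ⟨_, _, _⟩ := tg
    obtain ⟨_, _, _⟩ := yg
    apply hP
    refine ⟨F7 t y p z q u v, ?_, ?_, ?_⟩
    · intro i hi j hj hij
      simp only [pathP, Finset.coe_insert, Finset.coe_singleton, Set.mem_insert_iff,
        Set.mem_singleton_iff] at hi hj
      rcases hi with rfl | rfl | rfl | rfl | rfl | rfl | rfl <;>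
      rcases hj with rfl | rfl | rfl | rfl | rfl | rfl | rfl <;>
      simp only [F7] at hij <;> first | rfl | (exact absurd hij (by assumption)) | (exact absurd hij.symm (by assumption))
    · intro i hi
      simp only [pathP, Finset.mem_insert, Finset.mem_singleton] at hi
      rcases hi with rfl | rfl | rfl | rfl | rfl | rfl | rfl <;> simpa only [F7]
    · intro i hi
      simp only [pathP, Finset.mem_insert, Finset.mem_singleton] at hi
      rcases hi with rfl | rfl | rfl <;>
        simp only [Finset.image_insert, Finset.image_singleton, F7]
      · convert he using 1; ext s; simp; tauto
      · convert hf using 1; ext s; simp; tauto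
      · convert hg using 1

lemma injNe {f : ℕ → ℕ} {S : Finset ℕ} (h : Set.InjOn f ↑S) {i j : ℕ} (hi : i ∈ S) (hj : j ∈ S)
    (hij : i ≠ j) : f i ≠ f j := fun h' => hij (h hi hj h')

lemma freeP {H : ThreeGraph} (h : PC H.edges) : H.Free pathP := by
  rintro ⟨f, inj, -, he⟩
  have ne : ∀ i j, i ∈ pathP.verts → j ∈ pathP.verts → i ≠ j → f i ≠ f j :=
    fun i j hi hj hij => injNe inj hi hj hij
  have e1 := he {0, 1, 2} (by simp [pathP])
  have e2 := he {2, 3, 4} (by simp [pathP])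
  have e3 := he {4, 5, 6} (by simp [pathP])
  simp only [Finset.image_insert, Finset.image_singleton] at e1 e2 e3
  have n01 := ne 0 1 (by decide) (by decide) (by decide)
  have n02 := ne 0 2 (by decide) (by decide) (by decide)
  have n03 := ne 0 3 (by decide) (by decide) (by decide)
  have n04 := ne 0 4 (by decide) (by decide) (by decide)
  have n05 := ne 0 5 (by decide) (by decide) (by decide)
  have n06 := ne 0 6 (by decide) (by decide) (by decide)
  have n13 := ne 1 3 (by decide) (by decide) (by decide)
  have n14 := ne 1 4 (by decide) (by decide) (by decide)
  have n24 := ne 2 4 (by decide) (by decide) (by decide)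
  have n25 := ne 2 5 (by decide) (by decide) (by decide)
  have n26 := ne 2 6 (by decide) (by decide) (by decide)
  have n35 := ne 3 5 (by decide) (by decide) (by decide)
  have n36 := ne 3 6 (by decide) (by decide) (by decide)
  have := h _ e1 _ e2 _ e3 (f 2) (f 4) n24 (by simp) (by simp)
    (by intro t ht ht'; simp only [Finset.mem_insert, Finset.mem_singleton] at ht ht'; omega)
    (by simp) (by simp)
    (by intro t ht ht'; simp only [Finset.mem_insert, Finset.mem_singleton] at ht ht'; omega)
    (f 0) (by simp) n02
  simp only [Finset.mem_insert, Finset.mem_singleton] at this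
  omega

lemma freeC {H : ThreeGraph} (h : PC H.edges) : H.Free triangleC := by
  rintro ⟨f, inj, -, he⟩
  have ne : ∀ i j, i ∈ triangleC.verts → j ∈ triangleC.verts → i ≠ j → f i ≠ f j :=
    fun i j hi hj hij => injNe inj hi hj hij
  have e1 := he {0, 1, 2} (by simp [triangleC])
  have e2 := he {2, 3, 4} (by simp [triangleC])
  have e3 := he {4, 5, 0} (by simp [triangleC])
  simp only [Finset.image_insert, Finset.image_singleton] at e1 e2 e3
  have n01 := ne 0 1 (by decide) (by decide) (by decide)
  have n02 := ne 0 2 (by decide) (by decide) (by decide)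
  have n03 := ne 0 3 (by decide) (by decide) (by decide)
  have n04 := ne 0 4 (by decide) (by decide) (by decide)
  have n12 := ne 1 2 (by decide) (by decide) (by decide)
  have n13 := ne 1 3 (by decide) (by decide) (by decide)
  have n14 := ne 1 4 (by decide) (by decide) (by decide)
  have n15 := ne 1 5 (by decide) (by decide) (by decide)
  have n24 := ne 2 4 (by decide) (by decide) (by decide)
  have n25 := ne 2 5 (by decide) (by decide) (by decide)
  have n35 := ne 3 5 (by decide) (by decide) (by decide)
  have := h _ e1 _ e2 _ e3 (f 2) (f 4) n24 (by simp) (by simp)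
    (by intro t ht ht'; simp only [Finset.mem_insert, Finset.mem_singleton] at ht ht'; omega)
    (by simp) (by simp)
    (by intro t ht ht'; simp only [Finset.mem_insert, Finset.mem_singleton] at ht ht'; omega)
    (f 1) (by simp) n12
  simp only [Finset.mem_insert, Finset.mem_singleton] at this
  omega

lemma toM {H : ThreeGraph} (h : H.ContainsCopy matchingM) : HasM H.edges := by
  obtain ⟨f, inj, -, he⟩ := h
  refine ⟨_, he {0, 1, 2} (by simp [matchingM]), _, he {3, 4, 5} (by simp [matchingM]), ?_⟩
  intro t ht ht'
  rw [Finset.mem_image] at ht ht'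
  obtain ⟨i, hi, rfl⟩ := ht
  obtain ⟨j, hj, hij⟩ := ht'
  have hi' : i ∈ matchingM.verts := by simp [matchingM] at *; omega
  have hj' : j ∈ matchingM.verts := by simp [matchingM] at *; omega
  have := inj hj' hi' hij
  simp at hi hj
  omega

set_option maxHeartbeats 1000000 in
lemma ofM {H : ThreeGraph} (hv : H.IsValid) (h : HasM H.edges) : H.ContainsCopy matchingM := by
  obtain ⟨e, he, g, hg, hd⟩ := h
  have v1 := (hv _ he).2
  have v2 := (hv _ hg).2
  obtain ⟨x, y, z, h1, h2, h3, rfl⟩ := Finset.card_eq_three.1 (hv _ he).1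
  obtain ⟨u, v, w, j1, j2, j3, rfl⟩ := Finset.card_eq_three.1 (hv _ hg).1
  have m1 : x ∈ H.verts := v1 (by simp)
  have m2 : y ∈ H.verts := v1 (by simp)
  have m3 : z ∈ H.verts := v1 (by simp)
  have m4 : u ∈ H.verts := v2 (by simp)
  have m5 : v ∈ H.verts := v2 (by simp)
  have m6 : w ∈ H.verts := v2 (by simp)
  have d1 := hd x (by simp)
  have d2 := hd y (by simp)
  have d3 := hd z (by simp)
  simp only [Finset.mem_insert, Finset.mem_singleton, not_or] at d1 d2 d3
  obtain ⟨_, _, _⟩ := d1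
  obtain ⟨_, _, _⟩ := d2
  obtain ⟨_, _, _⟩ := d3
  refine ⟨F7 x y z u v w 0, ?_, ?_, ?_⟩
  · intro i hi j hj hij
    simp only [matchingM, Finset.coe_insert, Finset.coe_singleton, Set.mem_insert_iff,
      Set.mem_singleton_iff] at hi hj
    rcases hi with rfl | rfl | rfl | rfl | rfl | rfl <;>
    rcases hj with rfl | rfl | rfl | rfl | rfl | rfl <;>
    simp only [F7] at hij <;> first | rfl | (exact absurd hij (by assumption)) | (exact absurd hij.symm (by assumption))
  · intro i hi
    simp only [matchingM, Finset.mem_insert, Finset.mem_singleton] at hi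
    rcases hi with rfl | rfl | rfl | rfl | rfl | rfl <;> simpa only [F7]
  · intro i hi
    simp only [matchingM, Finset.mem_insert, Finset.mem_singleton] at hi
    rcases hi with rfl | rfl <;>
      simp only [Finset.image_insert, Finset.image_singleton, F7]
    · exact he
    · exact hg

lemma mem_set {n m : ℕ} : m ∈ condTuranSet n ↔ ∃ V E, V.card = n ∧ Good V E ∧ HasM E ∧
    E.card = m := by
  constructor
  · rintro ⟨H, hv, hc, hP, hC, hM, hm⟩
    exact ⟨H.verts, H.edges, hc, ⟨fun e he => (hv e he).1, fun e he => (hv e he).2, toPC hv hP hC⟩,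
      toM hM, hm⟩
  · rintro ⟨V, E, hc, G, hM, hm⟩
    have hv : (ThreeGraph.mk V E).IsValid := fun e he => ⟨G.unif e he, G.sub e he⟩
    exact ⟨⟨V, E⟩, hv, hc, freeP G.pc, freeC G.pc, ofM hv hM, hm⟩
end PCM

namespace PCM
open ThreeGraph

/-- all triples containing {0,1} or {2,3} -/
lemma low1 {n : ℕ} (hn : 6 ≤ n) : 2 * n - 4 ∈ condTuranSet n := by
  rw [mem_set]
  have mE : ∀ (i j : ℕ) e, e ∈ (Finset.range n \ {i, j}).image (fun w => ({i, j, w} : Finset ℕ)) ↔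
      ∃ w, w < n ∧ w ≠ i ∧ w ≠ j ∧ e = {i, j, w} := by
    intro i j e
    simp only [Finset.mem_image, Finset.mem_sdiff, Finset.mem_range, Finset.mem_insert,
      Finset.mem_singleton, not_or]
    constructor
    · rintro ⟨w, ⟨h1, h2, h3⟩, rfl⟩; exact ⟨w, h1, h2, h3, rfl⟩
    · rintro ⟨w, h1, h2, h3, rfl⟩; exact ⟨w, ⟨h1, h2, h3⟩, rfl⟩
  have cE : ∀ i j : ℕ, i < n → j < n → i ≠ j →
      ((Finset.range n \ {i, j}).image (fun w => ({i, j, w} : Finset ℕ))).card = n - 2 := by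
    intro i j hi hj hij
    rw [Finset.card_image_of_injOn, Finset.card_sdiff_of_subset, Finset.card_range,
      Finset.card_pair hij]
    · intro t ht
      simp only [Finset.mem_insert, Finset.mem_singleton] at ht
      rw [Finset.mem_range]
      omega
    · intro w hw w' hw' h
      have h1 : w ∈ ({i, j, w'} : Finset ℕ) := by
        have : w ∈ ({i, j, w} : Finset ℕ) := by simp
        rw [show ({i, j, w} : Finset ℕ) = {i, j, w'} from h] at this
        exact this
      have hw := Finset.mem_sdiff.1 (Finset.mem_coe.1 hw)
      simp only [Finset.mem_insert, Finset.mem_singleton] at h1 hw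
      tauto
  set E1 := (Finset.range n \ {0, 1}).image (fun w => ({0, 1, w} : Finset ℕ)) with hE1
  set E2 := (Finset.range n \ {2, 3}).image (fun w => ({2, 3, w} : Finset ℕ)) with hE2
  have m1 : ∀ e, e ∈ E1 ↔ _ := fun e => mE 0 1 e
  have m2 : ∀ e, e ∈ E2 ↔ _ := fun e => mE 2 3 e
  have half : ∀ (i j : ℕ), i ≠ j → ∀ e g f : Finset ℕ, ∀ p q : ℕ, p ≠ q → ∀ w v,
      e = {i, j, w} → g = {i, j, v} → p ∈ e → p ∈ f → (∀ t ∈ f, t ∈ g → t = q) →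
      ∀ t ∈ e, t ≠ p → t ∈ g := by
    intro i j hij e g f p q hpq w v he hg pe pf hfg t te tp
    subst he hg
    simp only [Finset.mem_insert, Finset.mem_singleton] at pe te
    rcases pe with rfl | rfl | rfl
    · exact absurd (hfg p pf (by simp)) hpq
    · exact absurd (hfg p pf (by simp)) hpq
    · rcases te with rfl | rfl | rfl
      · simp
      · simp
      · exact absurd rfl tp
  have same : ∀ (i j : ℕ), i ≠ j → ∀ e f : Finset ℕ, ∀ p : ℕ, ∀ w v,
      e = {i, j, w} → f = {i, j, v} → (∀ t ∈ e, t ∈ f → t = p) → False := by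
    intro i j hij e f p w v he hf h
    subst he hf
    exact hij ((h i (by simp) (by simp)).trans (h j (by simp) (by simp)).symm)
  refine ⟨Finset.range n, E1 ∪ E2, Finset.card_range n, ⟨?_, ?_, ?_⟩, ?_, ?_⟩
  · intro e he
    rw [Finset.mem_union, m1, m2] at he
    rcases he with ⟨w, h1, h2, h3, rfl⟩ | ⟨w, h1, h2, h3, rfl⟩ <;>
    exact Finset.card_eq_three.2 ⟨_, _, _, by decide, h2.symm, h3.symm, rfl⟩
  · intro e he t ht
    rw [Finset.mem_union, m1, m2] at he
    rw [Finset.mem_range]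
    rcases he with ⟨w, h1, h2, h3, rfl⟩ | ⟨w, h1, h2, h3, rfl⟩ <;>
    simp only [Finset.mem_insert, Finset.mem_singleton] at ht <;> omega
  · intro e he f hf g hg p q hpq pe pf hef qf qg hfg
    rw [Finset.mem_union, m1, m2] at he hf hg
    rcases he with ⟨w, -, -, -, he⟩ | ⟨w, -, -, -, he⟩ <;>
    rcases hf with ⟨u, -, -, -, hf⟩ | ⟨u, -, -, -, hf⟩
    · exact (same 0 1 (by decide) e f p w u he hf hef).elim
    · rcases hg with ⟨v, -, -, -, hg⟩ | ⟨v, -, -, -, hg⟩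
      · exact half 0 1 (by decide) e g f p q hpq w v he hg pe pf hfg
      · exact (same 2 3 (by decide) f g q u v hf hg hfg).elim
    · rcases hg with ⟨v, -, -, -, hg⟩ | ⟨v, -, -, -, hg⟩
      · exact (same 0 1 (by decide) f g q u v hf hg hfg).elim
      · exact half 2 3 (by decide) e g f p q hpq w v he hg pe pf hfg
    · exact (same 2 3 (by decide) e f p w u he hf hef).elim
  · refine ⟨{0, 1, 4}, ?_, {2, 3, 5}, ?_, ?_⟩
    · rw [Finset.mem_union, m1]; exact Or.inl ⟨4, by omega, by decide, by decide, rfl⟩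
    · rw [Finset.mem_union, m2]; exact Or.inr ⟨5, by omega, by decide, by decide, rfl⟩
    · decide
  · rw [Finset.card_union_of_disjoint, cE 0 1 (by omega) (by omega) (by decide),
      cE 2 3 (by omega) (by omega) (by decide)]
    · omega
    · rw [Finset.disjoint_left]
      intro e h1 h2
      rw [m1] at h1
      rw [m2] at h2
      obtain ⟨w, -, -, -, rfl⟩ := h1
      obtain ⟨v, -, -, -, h⟩ := h2
      have i0 : (0 : ℕ) ∈ ({2, 3, v} : Finset ℕ) := by rw [← h]; simp
      have i1 : (1 : ℕ) ∈ ({2, 3, v} : Finset ℕ) := by rw [← h]; simp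
      simp only [Finset.mem_insert, Finset.mem_singleton] at i0 i1
      omega

lemma low2 : 20 ∈ condTuranSet 10 := by
  rw [mem_set]
  have five : ∀ S : Finset ℕ, S.card = 5 → ∀ f ∈ S.powersetCard 3, ∀ g ∈ S.powersetCard 3, ∀ q,
      q ∈ f → q ∈ g → (∀ t ∈ f, t ∈ g → t = q) → ∀ t ∈ S, t ∉ f → t ∈ g := by
    intro S hS f hf g hg q qf qg h t tS tf
    rw [Finset.mem_powersetCard] at hf hg
    have h1 : f ∩ g = {q} := by
      ext s; rw [Finset.mem_inter, Finset.mem_singleton]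
      constructor
      · rintro ⟨i, j⟩; exact h s i j
      · rintro rfl; exact ⟨qf, qg⟩
    have h2 := Finset.card_union_add_card_inter f g
    rw [h1, Finset.card_singleton, hf.2, hg.2] at h2
    have h3 : f ∪ g = S := Finset.eq_of_subset_of_card_le (Finset.union_subset hf.1 hg.1) (by omega)
    rw [← h3, Finset.mem_union] at tS
    exact tS.resolve_left tf
  have hdis : ∀ t ∈ ({0, 1, 2, 3, 4} : Finset ℕ), t ∉ ({5, 6, 7, 8, 9} : Finset ℕ) := by decide
  set S1 : Finset ℕ := {0, 1, 2, 3, 4} with hS1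
  set S2 : Finset ℕ := {5, 6, 7, 8, 9} with hS2
  have c1 : S1.card = 5 := by decide
  have c2 : S2.card = 5 := by decide
  refine ⟨Finset.range 10, S1.powersetCard 3 ∪ S2.powersetCard 3, Finset.card_range _,
    ⟨?_, ?_, ?_⟩, ?_, ?_⟩
  · intro e he
    rw [Finset.mem_union, Finset.mem_powersetCard, Finset.mem_powersetCard] at he
    tauto
  · intro e he
    rw [Finset.mem_union, Finset.mem_powersetCard, Finset.mem_powersetCard] at he
    have j1 : S1 ⊆ Finset.range 10 := by decide
    have j2 : S2 ⊆ Finset.range 10 := by decide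
    rcases he with he | he
    · exact he.1.trans j1
    · exact he.1.trans j2
  · intro e he f hf g hg p q hpq pe pf hef qf qg hfg t te tp
    have sub : ∀ S : Finset ℕ, ∀ h ∈ S.powersetCard 3, ∀ t ∈ h, t ∈ S := fun S h hh t ht =>
      (Finset.mem_powersetCard.1 hh).1 ht
    have tf : t ∉ f := fun h => tp (hef t te h)
    rw [Finset.mem_union] at he hf hg
    rcases hf with hf | hf
    · have he' := he.resolve_right fun h => hdis p (sub _ _ hf _ pf) (sub _ _ h _ pe)
      have hg' := hg.resolve_right fun h => hdis q (sub _ _ hf _ qf) (sub _ _ h _ qg)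
      exact five S1 c1 f hf g hg' q qf qg hfg t (sub _ _ he' _ te) tf
    · have he' := he.resolve_left fun h => hdis p (sub _ _ h _ pe) (sub _ _ hf _ pf)
      have hg' := hg.resolve_left fun h => hdis q (sub _ _ h _ qg) (sub _ _ hf _ qf)
      exact five S2 c2 f hf g hg' q qf qg hfg t (sub _ _ he' _ te) tf
  · refine ⟨{0, 1, 2}, ?_, {5, 6, 7}, ?_, by decide⟩
    · rw [Finset.mem_union, Finset.mem_powersetCard]; left; decide
    · rw [Finset.mem_union, Finset.mem_powersetCard, Finset.mem_powersetCard]; right; decide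
  · rw [Finset.card_union_of_disjoint, Finset.card_powersetCard, Finset.card_powersetCard, c1, c2]
    · rfl
    · rw [Finset.disjoint_left]
      intro e h1 h2
      rw [Finset.mem_powersetCard] at h1 h2
      obtain ⟨t, ht⟩ := Finset.card_pos.1 (by omega : 0 < e.card)
      exact hdis t (h1.1 ht) (h2.1 ht)

lemma mem_comet {n : ℕ} {e : Finset ℕ} : e ∈ (comet n).edges ↔
    e ∈ ({0, 1, 2, 3} : Finset ℕ).powersetCard 3 ∨
    (e ⊆ insert 0 (Finset.Ico 4 n) ∧ e.card = 3 ∧ 0 ∈ e) := by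
  simp only [comet, Finset.mem_union, Finset.mem_filter, Finset.mem_powersetCard]
  tauto

lemma comet_card (n : ℕ) : (comet n).edges.card = 4 + (n - 4).choose 2 := by
  have h : ((insert 0 (Finset.Ico 4 n)).powersetCard 3).filter (fun e => 0 ∈ e) =
      ((Finset.Ico 4 n).powersetCard 2).image (insert 0) := by
    ext e
    simp only [Finset.mem_filter, Finset.mem_powersetCard, Finset.mem_image]
    constructor
    · rintro ⟨⟨h1, h2⟩, h3⟩
      refine ⟨e.erase 0, ⟨?_, ?_⟩, Finset.insert_erase h3⟩
      · intro t ht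
        rw [Finset.mem_erase] at ht
        exact (Finset.mem_insert.1 (h1 ht.2)).resolve_left ht.1
      · rw [Finset.card_erase_of_mem h3, h2]
    · rintro ⟨s, ⟨h1, h2⟩, rfl⟩
      have : 0 ∉ s := fun h => by have := h1 h; simp at this
      refine ⟨⟨Finset.insert_subset_insert _ h1, ?_⟩, by simp⟩
      rw [Finset.card_insert_of_notMem this, h2]
  rw [comet]
  simp only
  rw [Finset.card_union_of_disjoint, h, Finset.card_image_of_injOn, Finset.card_powersetCard,
    Finset.card_powersetCard, Nat.card_Ico]
  · rfl
  · intro s hs s' hs' hss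
    have h0 : 0 ∉ s := fun h => by
      have := (Finset.mem_powersetCard.1 hs).1 h; simp at this
    have h0' : 0 ∉ s' := fun h => by
      have := (Finset.mem_powersetCard.1 hs').1 h; simp at this
    rw [← Finset.erase_insert h0, ← Finset.erase_insert h0']
    exact congrArg (fun z => Finset.erase z 0) hss
  · rw [Finset.disjoint_left]
    intro e h1 h2
    rw [Finset.mem_filter, Finset.mem_powersetCard] at h2
    rw [Finset.mem_powersetCard] at h1
    have : e ⊆ {0} := by
      intro t ht
      have i1 := h1.1 ht
      have i2 := h2.1.1 ht
      simp only [Finset.mem_insert, Finset.mem_singleton, Finset.mem_Ico] at *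
      omega
    have := Finset.card_le_card this
    rw [Finset.card_singleton] at this
    omega

lemma comet_link {n : ℕ} {e f : Finset ℕ} (he : e ∈ (comet n).edges) (hf : f ∈ (comet n).edges)
    {p : ℕ} (pe : p ∈ e) (pf : p ∈ f) (h : ∀ t ∈ e, t ∈ f → t = p) : p = 0 := by
  rw [mem_comet] at he hf
  have mixed : ∀ e ∈ ({0, 1, 2, 3} : Finset ℕ).powersetCard 3, ∀ f ⊆ insert 0 (Finset.Ico 4 n),
      p ∈ e → p ∈ f → p = 0 := by
    intro e he f hf pe pf
    have i1 := (Finset.mem_powersetCard.1 he).1 pe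
    have i2 := hf pf
    simp only [Finset.mem_insert, Finset.mem_singleton, Finset.mem_Ico] at i1 i2
    omega
  rcases he with he | he <;> rcases hf with hf | hf
  · have : ∀ e ∈ ({0, 1, 2, 3} : Finset ℕ).powersetCard 3,
        ∀ f ∈ ({0, 1, 2, 3} : Finset ℕ).powersetCard 3, ∀ p ∈ e, p ∈ f →
        (∀ t ∈ e, t ∈ f → t = p) → p = 0 := by decide
    exact this e he f hf p pe pf h
  · exact mixed e he f hf.1 pe pf
  · exact mixed f hf e he.1 pf pe
  · exact (h 0 he.2.2 hf.2.2).symm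

lemma low3 {n : ℕ} (hn : 6 ≤ n) : 4 + (n - 4).choose 2 ∈ condTuranSet n := by
  rw [mem_set]
  refine ⟨Finset.range n, (comet n).edges, Finset.card_range n, ⟨?_, ?_, ?_⟩, ?_, comet_card n⟩
  · intro e he
    rw [mem_comet, Finset.mem_powersetCard] at he
    tauto
  · intro e he t ht
    rw [mem_comet, Finset.mem_powersetCard] at he
    rw [Finset.mem_range]
    rcases he with he | he
    · have := he.1 ht
      simp only [Finset.mem_insert, Finset.mem_singleton] at this
      omega
    · have := he.1 ht
      simp only [Finset.mem_insert, Finset.mem_Ico] at this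
      omega
  · intro e he f hf g hg p q hpq pe pf hef qf qg hfg
    exact absurd ((comet_link he hf pe pf hef).trans (comet_link hf hg qf qg hfg).symm) hpq
  · refine ⟨{1, 2, 3}, ?_, {0, 4, 5}, ?_, by decide⟩
    · rw [mem_comet]; left; decide
    · rw [mem_comet]; right
      refine ⟨?_, by decide, by decide⟩
      intro t ht
      simp only [Finset.mem_insert, Finset.mem_singleton, Finset.mem_Ico] at *
      omega

lemma iso_card {n : ℕ} (hn : 6 ≤ n) {H : ThreeGraph} (h : IsoCopy (comet n) H) :
    H.edges.card = 4 + (n - 4).choose 2 := by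
  obtain ⟨f, inj, -, he⟩ := h
  rw [← he, Finset.card_image_of_injOn, comet_card]
  refine (Finset.image_injOn_powerset_of_injOn inj).mono ?_
  intro e he
  rw [Finset.mem_coe, Finset.mem_powerset]
  rw [Finset.mem_coe, mem_comet, Finset.mem_powersetCard] at he
  intro t ht
  change t ∈ Finset.range n
  rw [Finset.mem_range]
  rcases he with he | he
  · have := he.1 ht
    simp only [Finset.mem_insert, Finset.mem_singleton] at this
    omega
  · have := he.1 ht
    simp only [Finset.mem_insert, Finset.mem_Ico] at this
    omega

lemma comet_iso {n : ℕ} (hn : 6 ≤ n) {H : ThreeGraph} (hc : H.verts.card = n)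
    (h : IsComet H.verts H.edges) : IsoCopy (comet n) H := by
  obtain ⟨q, a, b, c, qa, qb, qc, ab, ac, bc, hq, ha, hb, hcV, hE⟩ := h
  set W := H.verts \ {q, a, b, c} with hW
  have hsub : ({q, a, b, c} : Finset ℕ) ⊆ H.verts := by
    intro t ht
    simp only [Finset.mem_insert, Finset.mem_singleton] at ht
    rcases ht with rfl | rfl | rfl | rfl <;> assumption
  have h4 : ({q, a, b, c} : Finset ℕ).card = 4 := Finset.card_eq_of_equiv_fin
    (Finset.equivFinOfCardEq (by
      rw [Finset.card_insert_of_notMem (by simp [qa, qb, qc]),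
        Finset.card_insert_of_notMem (by simp [ab, ac]), Finset.card_pair bc]))
  have hcard : (Finset.Ico 4 n).card = W.card := by
    rw [Nat.card_Ico, hW, Finset.card_sdiff_of_subset hsub, h4, hc]
  let φ := Finset.equivOfCardEq hcard
  let f : ℕ → ℕ := fun i => if h : i ∈ Finset.Ico 4 n then (φ ⟨i, h⟩ : ℕ) else F7 q a b c 0 0 0 i
  have f0 : f 0 = q := by simp [f, F7]
  have f1 : f 1 = a := by simp [f, F7]
  have f2 : f 2 = b := by simp [f, F7]
  have f3 : f 3 = c := by simp [f, F7]
  have fW : ∀ i ∈ Finset.Ico 4 n, f i ∈ W := by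
    intro i hi
    have : f i = (φ ⟨i, hi⟩ : ℕ) := by simp only [f]; rw [dif_pos hi]
    rw [this]; exact (φ ⟨i, hi⟩).2
  have fI : ∀ i ∈ Finset.Ico 4 n, ∀ j ∈ Finset.Ico 4 n, f i = f j → i = j := by
    intro i hi j hj hij
    simp only [f] at hij
    rw [dif_pos hi, dif_pos hj] at hij
    have := φ.injective (Subtype.ext hij)
    exact congrArg Subtype.val this
  have fS : ∀ w ∈ W, ∃ i ∈ Finset.Ico 4 n, f i = w := by
    intro w hw
    refine ⟨(φ.symm ⟨w, hw⟩ : ℕ), (φ.symm ⟨w, hw⟩).2, ?_⟩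
    simp only [f]
    rw [dif_pos (φ.symm ⟨w, hw⟩).2]
    simp
  clear_value f
  have nW : ∀ w ∈ W, w ≠ q ∧ w ≠ a ∧ w ≠ b ∧ w ≠ c := by
    intro w hw
    rw [hW, Finset.mem_sdiff] at hw
    simpa only [Finset.mem_insert, Finset.mem_singleton, not_or] using hw.2
  have lt4 : ∀ i, i < n → i = 0 ∨ i = 1 ∨ i = 2 ∨ i = 3 ∨ i ∈ Finset.Ico 4 n := by
    intro i hi; rw [Finset.mem_Ico]; omega
  have inj : Set.InjOn f ↑(Finset.range n) := by
    intro i hi j hj hij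
    have hi := lt4 i (Finset.mem_range.1 hi)
    have hj := lt4 j (Finset.mem_range.1 hj)
    rcases hi with rfl | rfl | rfl | rfl | hi <;> rcases hj with rfl | rfl | rfl | rfl | hj
    case inr.inr.inr.inr.inr.inr.inr.inr => exact fI i hi j hj hij
    all_goals first
      | rfl
      | (exfalso; have w1 := nW _ (fW _ hi); grind)
      | (exfalso; have w1 := nW _ (fW _ hj); grind)
      | (exfalso; grind)
  have im1 : ({0, 1, 2, 3} : Finset ℕ).image f = {q, a, b, c} := by
    simp only [Finset.image_insert, Finset.image_singleton, f0, f1, f2, f3]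
  have im2 : (Finset.Ico 4 n).image f = W := by
    ext w
    rw [Finset.mem_image]
    constructor
    · rintro ⟨i, hi, rfl⟩; exact fW i hi
    · exact fS w
  have im3 : (insert 0 (Finset.Ico 4 n)).image f = insert q W := by
    rw [Finset.image_insert, im2, f0]
  have s1 : ({0, 1, 2, 3} : Finset ℕ) ⊆ Finset.range n := by
    intro t ht
    simp only [Finset.mem_insert, Finset.mem_singleton, Finset.mem_range] at *; omega
  have s2 : insert 0 (Finset.Ico 4 n) ⊆ Finset.range n := by
    intro t ht
    simp only [Finset.mem_insert, Finset.mem_Ico, Finset.mem_range] at *; omega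
  have cardf : ∀ s ⊆ Finset.range n, (s.image f).card = s.card := fun s hs =>
    Finset.card_image_of_injOn (inj.mono hs)
  refine ⟨f, inj, ?_, ?_⟩
  · change (Finset.range n).image f = H.verts
    have : Finset.range n = {0, 1, 2, 3} ∪ Finset.Ico 4 n := by
      ext t
      simp only [Finset.mem_union, Finset.mem_insert, Finset.mem_singleton, Finset.mem_range,
        Finset.mem_Ico]
      omega
    rw [this, Finset.image_union, im1, im2, hW, Finset.union_sdiff_of_subset hsub]
  · ext e
    rw [Finset.mem_image, hE]
    constructor
    · rintro ⟨s, hs, rfl⟩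
      rcases mem_comet.1 hs with h | ⟨h1, h2, h3⟩
      · left
        rw [Finset.mem_powersetCard] at h ⊢
        rw [cardf s (h.1.trans s1), ← im1]
        exact ⟨Finset.image_subset_image h.1, h.2⟩
      · right
        have hsub' : s.image f ⊆ insert q W := im3 ▸ Finset.image_subset_image h1
        have nn : ∀ t, t ≠ q → t ∉ W → t ∉ s.image f := by
          intro t h1 h2 h
          rcases Finset.mem_insert.1 (hsub' h) with h | h
          · exact h1 h
          · exact h2 h
        refine ⟨by rw [cardf s (h1.trans s2), h2], ?_, ?_, ?_, ?_, ?_⟩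
        · rw [← f0]; exact Finset.mem_image_of_mem f h3
        · intro t ht
          rcases Finset.mem_insert.1 (hsub' ht) with h | h
          · rw [h]; exact hq
          · exact (Finset.mem_sdiff.1 h).1
        · exact nn a qa.symm fun h => (nW a h).2.1 rfl
        · exact nn b qb.symm fun h => (nW b h).2.2.1 rfl
        · exact nn c qc.symm fun h => (nW c h).2.2.2 rfl
    · rintro (h | ⟨e3, qe, eV, ae, be, ce⟩)
      · rw [Finset.mem_powersetCard, ← im1, Finset.subset_image_iff] at h
        obtain ⟨⟨s, hs, rfl⟩, h3⟩ := h
        have hs : s ⊆ ({0, 1, 2, 3} : Finset ℕ) := by exact_mod_cast hs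
        refine ⟨s, ?_, rfl⟩
        rw [mem_comet, Finset.mem_powersetCard]
        exact Or.inl ⟨hs, by rw [← cardf s (hs.trans s1), h3]⟩
      · have : e ⊆ (insert 0 (Finset.Ico 4 n)).image f := by
          rw [im3]
          intro t ht
          rw [Finset.mem_insert]
          by_cases tq : t = q
          · exact Or.inl tq
          · right
            have ta : t ≠ a := by rintro rfl; exact ae ht
            have tb : t ≠ b := by rintro rfl; exact be ht
            have tc : t ≠ c := by rintro rfl; exact ce ht
            rw [hW]
            simp [eV ht, tq, ta, tb, tc]
        rw [Finset.subset_image_iff] at this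
        obtain ⟨s, hs, rfl⟩ := this
        have hs : s ⊆ insert 0 (Finset.Ico 4 n) := by exact_mod_cast hs
        refine ⟨s, ?_, rfl⟩
        rw [mem_comet]
        refine Or.inr ⟨hs, by rw [← cardf s (hs.trans s2), e3], ?_⟩
        obtain ⟨j, js, hj⟩ := Finset.mem_image.1 qe
        have : j = 0 := inj (s2 (hs js)) (s2 (by simp)) (by rw [hj, f0])
        exact this ▸ js

lemma upper {n m : ℕ} (h : m ∈ condTuranSet n) : m ≤ hb n := by
  obtain ⟨V, E, hV, G, hM, rfl⟩ := mem_set.1 h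
  exact (Q_all n V E hV G hM).2

end PCM

/-- The conditional Turán number `ex(n; {P,C} | M)`: it equals `2n - 4` for
`6 ≤ n ≤ 9`, `20` for `n = 10`, and `4 + binom(n-4,2)` for `n ≥ 11`, in which
case the extremal 3-graph is exactly the comet `Co(n)`. -/
theorem cond_turan_PC_given_M (n : ℕ) (hn : 6 ≤ n) :
    (n ≤ 9 → IsGreatest (condTuranSet n) (2 * n - 4)) ∧
    (n = 10 → IsGreatest (condTuranSet n) 20) ∧
    (11 ≤ n →
      IsGreatest (condTuranSet n) (4 + (n - 4).choose 2) ∧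
      ∀ H : ThreeGraph, H.IsValid → H.verts.card = n → H.Free pathP →
        H.Free triangleC → H.ContainsCopy matchingM →
        (H.edges.card = 4 + (n - 4).choose 2 ↔ ThreeGraph.IsoCopy (comet n) H)) := by
  refine ⟨fun h => ⟨PCM.low1 hn, fun m hm => ?_⟩, fun h => ?_, fun h => ⟨⟨PCM.low3 hn, fun m hm => ?_⟩, ?_⟩⟩
  · have := PCM.upper hm
    refine this.trans ?_
    interval_cases n <;> decide
  · subst h
    exact ⟨PCM.low2, fun m hm => PCM.upper hm⟩
  · have := PCM.upper hm
    rw [PCM.hb, if_neg (by omega), PCM.T_eq (by omega)] at this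
    exact this
  · intro H hv hc hP hC hM
    constructor
    · intro he
      exact PCM.comet_iso hn hc (PCM.extremal h
        ⟨fun e he => (hv e he).1, fun e he => (hv e he).2, PCM.toPC hv hP hC⟩ hc (PCM.toM hM) he)
    · exact PCM.iso_card hn
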